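/- Suppose ν satisfies the Carleman condition and F(x) ∈ S[x]^p is positive semidefinite on X = {x : G(x,y) ⪰ 0 ∀ y ∈ Y}. Then for every ε > 0 there exist N_ε ∈ ℕ and SOS matrices Σ₀ ∈ S[x]^p, Σ ∈ S[x,y]^{pq}, with deg Σ₀ ≤ 2(N_ε + d_F) and deg_x Σ ≤ 2(N_ε + d_F − d_G), such that θ^{N_ε}(F(x) + ε θ^{d_F} I_p) = Σ₀(x) + ∫_Y ⟨Σ(x,y), G(x,y)⟩_p dν(y), where θ = 1 + ‖x‖². -/

import Mathlib

open MeasureTheory MvPolynomial Matrix Finset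

noncomputable section

/-- A polynomial matrix is an SOS matrix if it factors as `Tᵀ * T`. -/
def IsSOSMatrix {σ : Type*} {ι : Type*} [Fintype ι]
    (M : Matrix ι ι (MvPolynomial σ ℝ)) : Prop :=
  ∃ (l : ℕ) (T : Matrix (Fin l) ι (MvPolynomial σ ℝ)), M = Tᵀ * T

/-- A polynomial is a sum of squares. -/
def IsSOSPoly {σ : Type*} (f : MvPolynomial σ ℝ) : Prop :=
  ∃ (l : ℕ) (g : Fin l → MvPolynomial σ ℝ), f = ∑ i, (g i) ^ 2

/-- The block-trace bilinear map `⟨A,B⟩_p = Tr_p (Aᵀ (I_p ⊗ B))`. -/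
def lram {R : Type*} [CommSemiring R] {ιp ιq : Type*} [Fintype ιq]
    (A : Matrix (ιp × ιq) (ιp × ιq) R) (B : Matrix ιq ιq R) :
    Matrix ιp ιp R :=
  Matrix.of fun i j => ∑ a : ιq, ∑ c : ιq, A (j, c) (i, a) * B c a

/-- The `x`-part of an exponent in the variables `x ⊕ y`. -/
def xPart {n m : ℕ} (d : (Fin n ⊕ Fin m) →₀ ℕ) : Fin n →₀ ℕ :=
  Finsupp.comapDomain Sum.inl d Sum.inl_injective.injOn

/-- Integrate out the `y`-variables of a polynomial in `(x, y)` against the measure `ν`: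
`∫_Y Σ_β H_β(x) y^β dν := Σ_β H_β(x) ∫_Y y^β dν`. -/
def integY {n m : ℕ} (ν : Measure (Fin m → ℝ))
    (q : MvPolynomial (Fin n ⊕ Fin m) ℝ) : MvPolynomial (Fin n) ℝ :=
  ∑ d ∈ q.support, MvPolynomial.monomial (xPart d)
    (q.coeff d * ∫ y, ∏ j : Fin m, (y j) ^ (d (Sum.inr j)) ∂ν)

/-- All polynomial moments of `ν` are finite. -/
def momentsFinite {m : ℕ} (ν : Measure (Fin m → ℝ)) : Prop :=
  ∀ h : MvPolynomial (Fin m) ℝ, Integrable (fun y => |MvPolynomial.eval y h|) ν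

/-- `ν` has support exactly `Y`. -/
def hasSupport {m : ℕ} (ν : Measure (Fin m → ℝ)) (Y : Set (Fin m → ℝ)) : Prop :=
  ν Yᶜ = 0 ∧ ∀ U : Set (Fin m → ℝ), IsOpen U → (U ∩ Y).Nonempty → 0 < ν U

/-- The multivariate Carleman condition on `ν`. -/
def Carleman {m : ℕ} (ν : Measure (Fin m → ℝ)) : Prop :=
  ∀ j : Fin m, ¬ Summable (fun d : ℕ =>
    (∫ y, (y j) ^ (2 * (d + 1)) ∂ν) ^ (-(1 : ℝ) / (2 * (d + 1))))

/-- Evaluate a polynomial matrix at a point. -/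
def evalMat {σ : Type*} {ι : Type*} (x : σ → ℝ)
    (M : Matrix ι ι (MvPolynomial σ ℝ)) : Matrix ι ι ℝ :=
  M.map (MvPolynomial.eval x)

/-- The spectral (L²-operator) norm of a real matrix. -/
def specNorm {ι : Type*} [Fintype ι] [DecidableEq ι] (A : Matrix ι ι ℝ) : ℝ :=
  ‖(Matrix.toEuclideanLin A).toContinuousLinearMap‖

/-- Degree of a polynomial matrix. -/
def matDeg {ι σ : Type*} [Fintype ι] (M : Matrix ι ι (MvPolynomial σ ℝ)) : ℕ :=
  Finset.univ.sup fun i => Finset.univ.sup fun j => (M i j).totalDegree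

/-- Degree in `x` of a polynomial in `(x,y)`. -/
def degX {n m : ℕ} (q : MvPolynomial (Fin n ⊕ Fin m) ℝ) : ℕ :=
  q.support.sup fun d => ∑ i : Fin n, d (Sum.inl i)

/-- Degree in `y` of a polynomial in `(x,y)`. -/
def degY {n m : ℕ} (q : MvPolynomial (Fin n ⊕ Fin m) ℝ) : ℕ :=
  q.support.sup fun d => ∑ j : Fin m, d (Sum.inr j)

def matDegX {ι : Type*} {n m : ℕ} [Fintype ι]
    (M : Matrix ι ι (MvPolynomial (Fin n ⊕ Fin m) ℝ)) : ℕ :=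
  Finset.univ.sup fun i => Finset.univ.sup fun j => degX (M i j)

def matDegY {ι : Type*} {n m : ℕ} [Fintype ι]
    (M : Matrix ι ι (MvPolynomial (Fin n ⊕ Fin m) ℝ)) : ℕ :=
  Finset.univ.sup fun i => Finset.univ.sup fun j => degY (M i j)

/-- Homogeneity in `x` of a polynomial in `(x,y)`. -/
def IsHomogeneousX {n m : ℕ} (q : MvPolynomial (Fin n ⊕ Fin m) ℝ) (k : ℕ) : Prop :=
  ∀ d ∈ q.support, ∑ i : Fin n, d (Sum.inl i) = k

/-- Positive semidefiniteness of the full (infinite) moment matrix `M(S)`: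
every finite principal block submatrix is PSD. -/
def MomentPSD {n p : ℕ} (S : (Fin n →₀ ℕ) → Matrix (Fin p) (Fin p) ℝ) : Prop :=
  ∀ (N : ℕ) (idx : Fin N → (Fin n →₀ ℕ)),
    (Matrix.of fun a b : Fin N × Fin p => S (idx a.1 + idx b.1) a.2 b.2).PosSemidef

/-- Exponents of degree at most `d` in `n` variables. -/
def Expo (n d : ℕ) := {a : Fin n → Fin (d + 1) // ∑ i, (a i : ℕ) ≤ d}

instance (n d : ℕ) : Fintype (Expo n d) := by unfold Expo; infer_instance
instance (n d : ℕ) : DecidableEq (Expo n d) := by unfold Expo; infer_instance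

def expF {n d : ℕ} (a : Fin n → Fin (d + 1)) : Fin n →₀ ℕ :=
  Finsupp.equivFunOnFinite.symm (fun i => (a i : ℕ))

/-- Truncated moment matrix `M_d(S)`. -/
def momentMat {n p : ℕ} (S : (Fin n →₀ ℕ) → Matrix (Fin p) (Fin p) ℝ) (d : ℕ) :
    Matrix (Expo n d × Fin p) (Expo n d × Fin p) ℝ :=
  Matrix.of fun a b => S (expF a.1.1 + expF b.1.1) a.2 b.2

/-- Truncated localizing matrix `M^ν_{d,k}(G S)`. -/
def locMat {n m p q : ℕ} (ν : Measure (Fin m → ℝ))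
    (G : Matrix (Fin q) (Fin q) (MvPolynomial (Fin n ⊕ Fin m) ℝ))
    (S : (Fin n →₀ ℕ) → Matrix (Fin p) (Fin p) ℝ) (d k : ℕ) :
    Matrix ((Expo n d × Expo m k) × (Fin p × Fin q))
           ((Expo n d × Expo m k) × (Fin p × Fin q)) ℝ :=
  Matrix.of fun r c =>
    ∑ e ∈ (G r.2.2 c.2.2).support,
      (∫ y, ∏ j : Fin m, (y j) ^ (e (Sum.inr j) + (r.1.2.1 j : ℕ) + (c.1.2.1 j : ℕ)) ∂ν) *
      ((G r.2.2 c.2.2).coeff e *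
        S (expF r.1.1.1 + expF c.1.1.1 + xPart e) r.2.1 c.2.1)

/-- The Riesz functional `L_S(H) = Σ_α tr(H_α S_α)`. -/
def RieszL {n p : ℕ} (S : (Fin n →₀ ℕ) → Matrix (Fin p) (Fin p) ℝ)
    (H : Matrix (Fin p) (Fin p) (MvPolynomial (Fin n) ℝ)) : ℝ :=
  ∑ i, ∑ j, ∑ α ∈ (H i j).support, (H i j).coeff α * S α j i

end


theorem norm_le_taylor_sum {E : Type*} [NormedAddCommGroup E] [NormedSpace ℝ E] (n : ℕ) :
    ∀ (f : ℕ → ℝ → E) (A : ℕ → ℝ) (x : ℝ),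
      (∀ k y, HasDerivAt (f k) (f (k + 1) y) y) → (∀ i < n, ‖f i x‖ ≤ A i) →
      (∀ y, ‖f n y‖ ≤ A n) → ∀ h : ℝ, 0 ≤ h →
      ‖f 0 (x + h)‖ ≤ ∑ i ∈ range (n + 1), A i * (h ^ i / i.factorial) := by
  induction n with
  | zero =>
    intro f A x _ _ hn h _
    simpa using hn (x + h)
  | succ n ih =>
    intro f A x hf hA hn h hh
    have key := ih (fun k => f (k + 1)) (fun k => A (k + 1)) x (fun k y => hf (k + 1) y)
      (fun i hi => hA (i + 1) (by omega)) hn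
    have hB : ∀ t : ℝ, HasDerivAt
        (fun t : ℝ => ∑ i ∈ range (n + 2), A i * (t ^ i / i.factorial))
        (∑ i ∈ range (n + 1), A (i + 1) * (t ^ i / i.factorial)) t := by
      intro t
      have h1 : HasDerivAt
          (fun t : ℝ => ∑ i ∈ range (n + 2), A i * (t ^ i / i.factorial))
          (∑ i ∈ range (n + 2), A i * ((i : ℝ) * t ^ (i - 1) / i.factorial)) t :=
        HasDerivAt.fun_sum fun i _ => ((hasDerivAt_pow i t).div_const _).const_mul _
      convert h1 using 1
      rw [Finset.sum_range_succ' _ (n + 1)]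
      simp only [Nat.cast_zero, zero_mul, zero_div, mul_zero, add_zero]
      refine Finset.sum_congr rfl fun i _ => ?_
      rw [Nat.factorial_succ]
      have : (i.factorial : ℝ) ≠ 0 := by positivity
      push_cast
      have h2 : (i : ℝ) + 1 ≠ 0 := by positivity
      field_simp
    have hd : ∀ t : ℝ, HasDerivAt (fun t => f 0 (x + t)) (f 1 (x + t)) t := fun t =>
      (hf 0 (x + t)).comp_const_add x t
    refine image_norm_le_of_norm_deriv_right_le_deriv_boundary (a := 0) (b := h)
      (f := fun t => f 0 (x + t)) (f' := fun t => f 1 (x + t))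
      (fun t _ => (hd t).continuousAt.continuousWithinAt)
      (fun t _ => (hd t).hasDerivWithinAt)
      ?_ hB (fun t ht => key t ht.1) (Set.right_mem_Icc.2 hh)
    rw [Finset.sum_range_succ' _ (n + 1)]
    simpa using hA 0 (by omega)

theorem logConvex_ratio_mono {M : ℕ → ℝ} (hM : ∀ k, 0 < M k)
    (hlog : ∀ k, M (k + 1) ^ 2 ≤ M k * M (k + 2)) :
    Antitone fun k => M k / M (k + 1) := by
  refine antitone_nat_of_succ_le fun k => ?_
  rw [div_le_div_iff₀ (hM _) (hM _)]
  nlinarith [hlog k]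

theorem logConvex_le_mul_pow {M : ℕ → ℝ} (hM : ∀ k, 0 < M k)
    (hlog : ∀ k, M (k + 1) ^ 2 ≤ M k * M (k + 2)) {N j i : ℕ} (h : j + i ≤ N + 1) :
    M (j + i) ≤ M j * (M (N + 1) / M N) ^ i := by
  induction i with
  | zero => simp
  | succ i ih =>
    have hr := logConvex_ratio_mono hM hlog (show j + i ≤ N by omega)
    have hr' : M (j + i + 1) / M (j + i) ≤ M (N + 1) / M N := by
      rw [← inv_div, ← inv_div (M N)]
      exact inv_anti₀ (div_pos (hM _) (hM _)) hr
    rw [div_le_iff₀ (hM _)] at hr'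
    calc M (j + (i + 1)) ≤ M (N + 1) / M N * M (j + i) := hr'
      _ ≤ M (N + 1) / M N * (M j * (M (N + 1) / M N) ^ i) :=
          mul_le_mul_of_nonneg_left (ih (by omega)) (div_pos (hM _) (hM _)).le
      _ = _ := by ring

/-- The step of Bang's argument: smallness of the first `N + 1` derivatives to order `N + 1`
propagates, at the price of one order, over a distance proportional to `M N / M (N + 1)`. -/
theorem bang_step {E : Type*} [NormedAddCommGroup E] [NormedSpace ℝ E]
    {f : ℕ → ℝ → E} {M : ℕ → ℝ} (hf : ∀ k y, HasDerivAt (f k) (f (k + 1) y) y)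
    (hM : ∀ k, 0 < M k) (hlog : ∀ k, M (k + 1) ^ 2 ≤ M k * M (k + 2))
    (hb : ∀ k y, ‖f k y‖ ≤ M k) {N : ℕ} {x h : ℝ}
    (hx : ∀ j < N + 1, ‖f j x‖ ≤ Real.exp ((j : ℝ) - (N + 1 : ℕ)) * M j) (hh : 0 ≤ h)
    (hhN : h ≤ M N / M (N + 1) / Real.exp 1) :
    ∀ j < N, ‖f j (x + h)‖ ≤ Real.exp ((j : ℝ) - N) * M j := by
  intro j hj
  have h1 := norm_le_taylor_sum (N + 1 - j) (fun k => f (j + k))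
    (fun k => Real.exp (((j + k : ℕ) : ℝ) - (N + 1 : ℕ)) * M (j + k)) x
    (fun k y => hf (j + k) y) (fun i hi => hx (j + i) (by omega))
    (fun y => by
      have : j + (N + 1 - j) = N + 1 := by omega
      simpa [this] using hb (N + 1) y) h hh
  set r := M (N + 1) / M N with hr
  have hr0 : 0 < r := div_pos (hM _) (hM _)
  have hehr : Real.exp 1 * r * h ≤ 1 := by
    have : M N / M (N + 1) = r⁻¹ := by rw [hr, inv_div]
    rw [this, le_div_iff₀ (Real.exp_pos 1)] at hhN
    calc Real.exp 1 * r * h = (h * Real.exp 1) * r := by ring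
      _ ≤ r⁻¹ * r := mul_le_mul_of_nonneg_right hhN hr0.le
      _ = 1 := inv_mul_cancel₀ hr0.ne'
  have h0 : 0 ≤ Real.exp 1 * r * h := by positivity
  calc ‖f j (x + h)‖ ≤ ∑ i ∈ range (N + 1 - j + 1),
          Real.exp (((j + i : ℕ) : ℝ) - (N + 1 : ℕ)) * M (j + i) * (h ^ i / i.factorial) := h1
    _ ≤ ∑ i ∈ range (N + 1 - j + 1), Real.exp ((j : ℝ) - (N + 1 : ℕ)) * M j *
          ((Real.exp 1 * r * h) ^ i / i.factorial) := by
        refine Finset.sum_le_sum fun i hi => ?_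
        have hi' : j + i ≤ N + 1 := by have := Finset.mem_range.1 hi; omega
        have h2 := logConvex_le_mul_pow hM hlog hi'
        have h3 : Real.exp (((j + i : ℕ) : ℝ) - (N + 1 : ℕ)) =
            Real.exp ((j : ℝ) - (N + 1 : ℕ)) * Real.exp 1 ^ i := by
          rw [← Real.exp_nat_mul, ← Real.exp_add]
          congr 1; push_cast; ring
        rw [h3]
        calc _ ≤ Real.exp ((j : ℝ) - (N + 1 : ℕ)) * Real.exp 1 ^ i * (M j * r ^ i) *
              (h ^ i / i.factorial) := by gcongr
          _ = _ := by rw [mul_pow, mul_pow]; ring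
    _ = Real.exp ((j : ℝ) - (N + 1 : ℕ)) * M j *
          ∑ i ∈ range (N + 1 - j + 1), ((Real.exp 1 * r * h) ^ i / i.factorial) := by
        rw [Finset.mul_sum]
    _ ≤ Real.exp ((j : ℝ) - (N + 1 : ℕ)) * M j * Real.exp 1 := by
        have := (hM j).le
        gcongr
        exact (Real.sum_le_exp_of_nonneg h0 _).trans (Real.exp_le_exp.2 hehr)
    _ = Real.exp ((j : ℝ) - N) * M j := by
        rw [mul_right_comm, ← Real.exp_add]
        congr 2; push_cast; ring

theorem bang_propagate {E : Type*} [NormedAddCommGroup E] [NormedSpace ℝ E]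
    {f : ℕ → ℝ → E} {M : ℕ → ℝ} (hf : ∀ k y, HasDerivAt (f k) (f (k + 1) y) y)
    (hM : ∀ k, 0 < M k) (hlog : ∀ k, M (k + 1) ^ 2 ≤ M k * M (k + 2))
    (hb : ∀ k y, ‖f k y‖ ≤ M k) (K d : ℕ) : ∀ (x h : ℝ),
    (∀ j < K + d, ‖f j x‖ ≤ Real.exp ((j : ℝ) - (K + d : ℕ)) * M j) → 0 ≤ h →
    h ≤ ∑ k ∈ range d, M (K + k) / M (K + k + 1) / Real.exp 1 →
    ∀ j < K, ‖f j (x + h)‖ ≤ Real.exp ((j : ℝ) - K) * M j := by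
  induction d with
  | zero =>
    intro x h hx hh hle
    have : h = 0 := le_antisymm (by simpa using hle) hh
    simpa [this] using hx
  | succ d ih =>
    intro x h hx hh hle
    rw [Finset.sum_range_succ] at hle
    set c := M (K + d) / M (K + d + 1) / Real.exp 1
    have hc : 0 < c := div_pos (div_pos (hM _) (hM _)) (Real.exp_pos 1)
    have h1 := bang_step (N := K + d) hf hM hlog hb (x := x) (h := min h c) hx
      (le_min hh hc.le) (min_le_right _ _)
    have h2 := ih (x + min h c) (h - min h c) h1 (by simp) (by
      rcases le_total h c with hc' | hc'
      · rw [min_eq_left hc', sub_self]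
        exact Finset.sum_nonneg fun k _ => (div_pos (div_pos (hM _) (hM _)) (Real.exp_pos 1)).le
      · rw [min_eq_right hc']; linarith)
    simpa [add_assoc] using h2

/-- Denjoy–Carleman on a half-line: a function flat at the origin in a quasi-analytic class
vanishes. -/
theorem quasiAnalytic_zero_of_nonneg {E : Type*} [NormedAddCommGroup E] [NormedSpace ℝ E]
    {f : ℕ → ℝ → E} {M : ℕ → ℝ} (hf : ∀ k y, HasDerivAt (f k) (f (k + 1) y) y)
    (hM : ∀ k, 0 < M k) (hlog : ∀ k, M (k + 1) ^ 2 ≤ M k * M (k + 2))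
    (hb : ∀ k y, ‖f k y‖ ≤ M k) (hdiv : ¬ Summable fun k => M k / M (k + 1))
    (h0 : ∀ k, f k 0 = 0) {x : ℝ} (hx : 0 ≤ x) : f 0 x = 0 := by
  have hK : ∀ K : ℕ, ‖f 0 x‖ ≤ Real.exp (-((K + 1 : ℕ) : ℝ)) * M 0 := by
    intro K
    have h1 : ¬ Summable fun k => M (K + 1 + k) / M (K + 1 + k + 1) / Real.exp 1 := by
      intro hs
      apply hdiv
      rw [← summable_nat_add_iff (K + 1)]
      have := hs.mul_right (Real.exp 1)
      refine this.congr fun k => ?_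
      rw [div_mul_cancel₀ _ (Real.exp_pos 1).ne', add_comm k]
    have h2 := (not_summable_iff_tendsto_nat_atTop_of_nonneg
      (fun k => (div_pos (div_pos (hM _) (hM _)) (Real.exp_pos 1)).le)).1 h1
    obtain ⟨d, hd⟩ := (h2.eventually_ge_atTop x).exists
    have h3 := bang_propagate hf hM hlog hb (K + 1) d 0 x
      (fun j _ => by
        rw [h0 j, norm_zero]; exact mul_nonneg (Real.exp_pos _).le (hM j).le) hx hd 0 (by omega)
    simpa using h3
  have hlim : Filter.Tendsto (fun K : ℕ => Real.exp (-((K + 1 : ℕ) : ℝ)) * M 0) Filter.atTop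
      (nhds (0 * M 0)) := by
    refine Filter.Tendsto.mul_const _ ?_
    exact Real.tendsto_exp_neg_atTop_nhds_zero.comp
      (tendsto_natCast_atTop_atTop.comp (Filter.tendsto_add_atTop_nat 1))
  rw [zero_mul] at hlim
  exact norm_le_zero_iff.1 (ge_of_tendsto' hlim hK)

theorem quasiAnalytic_zero {E : Type*} [NormedAddCommGroup E] [NormedSpace ℝ E]
    {f : ℕ → ℝ → E} {M : ℕ → ℝ} (hf : ∀ k y, HasDerivAt (f k) (f (k + 1) y) y)
    (hM : ∀ k, 0 < M k) (hlog : ∀ k, M (k + 1) ^ 2 ≤ M k * M (k + 2))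
    (hb : ∀ k y, ‖f k y‖ ≤ M k) (hdiv : ¬ Summable fun k => M k / M (k + 1))
    (h0 : ∀ k, f k 0 = 0) (x : ℝ) : f 0 x = 0 := by
  rcases le_total 0 x with hx | hx
  · exact quasiAnalytic_zero_of_nonneg hf hM hlog hb hdiv h0 hx
  · have h1 := quasiAnalytic_zero_of_nonneg (f := fun k y => (-1 : ℝ) ^ k • f k (-y)) (M := M)
      (fun k y => by
        have := ((hf k (-y)).scomp y (hasDerivAt_neg y)).const_smul ((-1 : ℝ) ^ k)
        rw [smul_smul, ← pow_succ] at this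
        exact this)
      hM hlog (fun k y => by simpa [norm_smul] using hb k (-y)) hdiv
      (fun k => by simp [h0]) (x := -x) (by linarith)
    simpa using h1

theorem sq_integral_abs_mul_le {α : Type*} [MeasurableSpace α] {μ : Measure α} {f g : α → ℝ}
    (hf : MemLp f 2 μ) (hg : MemLp g 2 μ) :
    (∫ a, |f a * g a| ∂μ) ^ 2 ≤ (∫ a, f a ^ 2 ∂μ) * ∫ a, g a ^ 2 ∂μ := by
  have h := integral_mul_norm_le_Lp_mul_Lq (μ := μ) (f := f) (g := g)
    (p := 2) (q := 2) Real.HolderConjugate.two_two (by simpa using hf) (by simpa using hg)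
  simp only [Real.norm_eq_abs, Real.rpow_two, sq_abs, ← Real.sqrt_eq_rpow] at h
  have h0 : 0 ≤ ∫ a, |f a * g a| ∂μ := integral_nonneg fun a => abs_nonneg _
  simp only [← abs_mul] at h
  calc _ ≤ (√(∫ a, f a ^ 2 ∂μ) * √(∫ a, g a ^ 2 ∂μ)) ^ 2 := by gcongr
    _ = _ := by
      rw [mul_pow, Real.sq_sqrt (integral_nonneg fun a => sq_nonneg _),
        Real.sq_sqrt (integral_nonneg fun a => sq_nonneg _)]

theorem ae_eq_zero_of_fourier_eq_zero {m : ℕ} {μ : Measure (Fin m → ℝ)} [IsFiniteMeasure μ]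
    {f : (Fin m → ℝ) → ℝ} (hf : Integrable f μ)
    (h : ∀ t : Fin m → ℝ,
      ∫ y, (f y : ℂ) * Complex.exp ((∑ j, t j * y j : ℝ) * Complex.I) ∂μ = 0) :
    f =ᵐ[μ] 0 := by
  have fin : ∀ g : (Fin m → ℝ) → ℝ, Integrable g μ →
      IsFiniteMeasure (μ.withDensity fun y => ENNReal.ofReal (g y)) := fun g hg =>
    isFiniteMeasure_withDensity_ofReal hg.2
  have hint : ∀ (g : (Fin m → ℝ) → ℝ) (t : Fin m → ℝ), Integrable g μ → Integrable (fun y =>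
      (g y : ℂ) * Complex.exp ((∑ j, t j * y j : ℝ) * Complex.I)) μ := by
    intro g t hg
    refine hg.ofReal.mul_bdd (c := 1) ?_ (Filter.Eventually.of_forall fun y => ?_)
    · exact Continuous.aestronglyMeasurable (by fun_prop)
    · rw [Complex.norm_exp_ofReal_mul_I]
  have hchar : ∀ (g : (Fin m → ℝ) → ℝ) (L : StrongDual ℝ (Fin m → ℝ)), Integrable g μ →
      charFunDual (μ.withDensity fun y => ENNReal.ofReal (g y)) L =
      ∫ y, ((max (g y) 0 : ℝ) : ℂ) *
        Complex.exp ((∑ j, L (Pi.single j 1) * y j : ℝ) * Complex.I) ∂μ := by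
    intro g L hg
    rw [charFunDual_apply, integral_withDensity_eq_integral_toReal_smul₀
      hg.aestronglyMeasurable.aemeasurable.ennreal_ofReal (by simp)]
    refine integral_congr_ae (Filter.Eventually.of_forall fun y => ?_)
    have hL : L y = ∑ j, L (Pi.single j 1) * y j := by
      conv_lhs => rw [← Finset.univ_sum_single y, map_sum]
      refine Finset.sum_congr rfl fun j _ => ?_
      rw [show (Pi.single j (y j) : Fin m → ℝ) = y j • Pi.single j 1 by
        rw [← Pi.single_smul, smul_eq_mul, mul_one], map_smul, smul_eq_mul, mul_comm]
    simp only [hL, ENNReal.toReal_ofReal', Complex.real_smul]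
  have := fin f hf
  have := fin (fun y => -f y) hf.neg
  have heq : (μ.withDensity fun y => ENNReal.ofReal (f y)) =
      μ.withDensity fun y => ENNReal.ofReal (-f y) := by
    refine Measure.ext_of_charFunDual (funext fun L => ?_)
    rw [hchar f L hf, hchar (fun y => -f y) L hf.neg, ← sub_eq_zero,
      ← integral_sub (hint _ _ hf.pos_part) (hint _ _ hf.neg_part)]
    refine Eq.trans (integral_congr_ae (Filter.Eventually.of_forall fun y => ?_))
      (h fun j => L (Pi.single j 1))
    have h1 : max (f y) 0 - max (-f y) 0 = f y := by
      rcases le_total (f y) 0 with h0 | h0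
      · rw [max_eq_right h0, max_eq_left (by linarith)]; ring
      · rw [max_eq_left h0, max_eq_right (by linarith)]; ring
    simp only
    rw [← sub_mul, ← Complex.ofReal_sub, h1]
  filter_upwards [(withDensity_eq_iff hf.aestronglyMeasurable.aemeasurable.ennreal_ofReal
    hf.neg.aestronglyMeasurable.aemeasurable.ennreal_ofReal hf.lintegral_lt_top.ne).1 heq] with y hy
  rw [Pi.neg_apply] at hy
  rcases le_total (f y) 0 with h0 | h0
  · rw [ENNReal.ofReal_of_nonpos h0, eq_comm, ENNReal.ofReal_eq_zero] at hy
    exact le_antisymm h0 (show (0 : ℝ) ≤ f y by linarith)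
  · rw [ENNReal.ofReal_of_nonpos (show -f y ≤ 0 by linarith), ENNReal.ofReal_eq_zero] at hy
    exact le_antisymm hy h0

/-- The moments of `μ` in the coordinate `j` lie in a quasi-analytic class, uniformly against
polynomial densities. -/
def QuasiAnalyticMoments {m : ℕ} (μ : Measure (Fin m → ℝ)) (j : Fin m) : Prop :=
  ∃ M : ℕ → ℝ, (∀ k, 0 < M k) ∧ (∀ k, M (k + 1) ^ 2 ≤ M k * M (k + 2)) ∧
    (¬ Summable fun k => M k / M (k + 1)) ∧
    ∀ P : MvPolynomial (Fin m) ℝ, ∃ C, ∀ l, ∫ y, eval y (P * X j ^ l) ^ 2 ∂μ ≤ C * M l ^ 2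

theorem integral_mul_exp_eq_zero {m : ℕ} {μ : Measure (Fin m → ℝ)}
    (hpoly : ∀ P : MvPolynomial (Fin m) ℝ, MemLp (fun y => eval y P) 2 μ)
    (hqa : ∀ j, QuasiAnalyticMoments μ j) {f : (Fin m → ℝ) → ℝ} (hf : MemLp f 2 μ)
    (horth : ∀ P : MvPolynomial (Fin m) ℝ, ∫ y, f y * eval y P ∂μ = 0) (s : Finset (Fin m)) :
    ∀ (t : Fin m → ℝ), (∀ j ∉ s, t j = 0) → ∀ P : MvPolynomial (Fin m) ℝ,
      ∫ y, ((f y * eval y P : ℝ) : ℂ) * Complex.exp ((∑ j, t j * y j : ℝ) * Complex.I) ∂μ = 0 := by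
  have hint : ∀ (P : MvPolynomial (Fin m) ℝ) (t : Fin m → ℝ), Integrable (fun y =>
      ((f y * eval y P : ℝ) : ℂ) * Complex.exp ((∑ j, t j * y j : ℝ) * Complex.I)) μ := by
    intro P t
    have h1 : Integrable (fun y => f y * eval y P) μ := hf.integrable_mul (hpoly P)
    refine h1.ofReal.mul_bdd (c := 1) ?_ (Filter.Eventually.of_forall fun y => ?_)
    · exact Continuous.aestronglyMeasurable (by fun_prop)
    · rw [Complex.norm_exp_ofReal_mul_I]
  induction s using Finset.induction_on with
  | empty =>
    intro t ht P
    have : t = 0 := funext fun j => ht j (by simp)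
    simp only [this, Pi.zero_apply, zero_mul, Finset.sum_const_zero, Complex.ofReal_zero,
      Complex.exp_zero, mul_one]
    rw [integral_complex_ofReal, horth P, Complex.ofReal_zero]
  | insert j s hj ih =>
    intro t ht P
    obtain ⟨M, hM, hlog, hdiv, hbd⟩ := hqa j
    obtain ⟨C, hC⟩ := hbd P
    set T : ℝ → Fin m → ℝ := fun τ => Function.update t j τ with hT
    set ψ : ℕ → ℝ → ℂ := fun l τ => ∫ y, ((f y * eval y (P * X j ^ l) : ℝ) : ℂ) *
      Complex.exp ((∑ i, T τ i * y i : ℝ) * Complex.I) * Complex.I ^ l ∂μ with hψ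
    have hnorm : ∀ (l : ℕ) (τ : ℝ) (y : Fin m → ℝ), ‖((f y * eval y (P * X j ^ l) : ℝ) : ℂ) *
        Complex.exp ((∑ i, T τ i * y i : ℝ) * Complex.I) * Complex.I ^ l‖ =
        |f y * eval y (P * X j ^ l)| := by
      intro l τ y
      rw [norm_mul, norm_mul, Complex.norm_exp_ofReal_mul_I, norm_pow, Complex.norm_I,
        one_pow, mul_one, mul_one, Complex.norm_real, Real.norm_eq_abs]
    have hderiv : ∀ l τ, HasDerivAt (ψ l) (ψ (l + 1) τ) τ := by
      intro l τ
      refine (hasDerivAt_integral_of_dominated_loc_of_deriv_le (μ := μ)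
        (F := fun τ y => ((f y * eval y (P * X j ^ l) : ℝ) : ℂ) *
          Complex.exp ((∑ i, T τ i * y i : ℝ) * Complex.I) * Complex.I ^ l)
        (F' := fun τ y => ((f y * eval y (P * X j ^ (l + 1)) : ℝ) : ℂ) *
          Complex.exp ((∑ i, T τ i * y i : ℝ) * Complex.I) * Complex.I ^ (l + 1))
        (bound := fun y => |f y * eval y (P * X j ^ (l + 1))|)
        (Filter.univ_mem : Set.univ ∈ nhds τ)
        (Filter.Eventually.of_forall fun τ => ((hint _ _).mul_const _).aestronglyMeasurable)
        ((hint _ _).mul_const _) ((hint _ _).mul_const _).aestronglyMeasurable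
        (Filter.Eventually.of_forall fun y τ _ => (hnorm (l + 1) τ y).le)
        (hf.integrable_mul (hpoly _)).abs
        (Filter.Eventually.of_forall fun y τ _ => ?_)).2
      have hsum : ∀ τ : ℝ, ∑ i, T τ i * y i = τ * y j + ∑ i ∈ univ.erase j, t i * y i := by
        intro τ
        rw [← Finset.add_sum_erase _ _ (Finset.mem_univ j)]
        congr 1
        · simp [hT]
        · refine Finset.sum_congr rfl fun i hi => ?_
          simp [hT, Function.update_of_ne (Finset.ne_of_mem_erase hi)]
      simp only [hsum]
      have h1 : HasDerivAt (fun τ : ℝ => ((τ * y j + ∑ i ∈ univ.erase j, t i * y i : ℝ) : ℂ))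
          ((y j : ℝ) : ℂ) τ := by
        refine HasDerivAt.ofReal_comp ?_
        simpa using ((hasDerivAt_id τ).mul_const (y j)).add_const (∑ i ∈ univ.erase j, t i * y i)
      have h2 := (((h1.mul_const Complex.I).cexp.const_mul
        ((f y * eval y (P * X j ^ l) : ℝ) : ℂ)).mul_const (Complex.I ^ l))
      refine h2.congr_deriv ?_
      simp only [map_mul, map_pow, eval_X]
      push_cast
      ring
    have hzero : ∀ l, ψ l 0 = 0 := by
      intro l
      have h1 := ih (T 0) (fun i hi => by
        by_cases hij : i = j
        · subst hij; simp [hT]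
        · rw [hT]; simp only [Function.update_of_ne hij]
          exact ht i (by simp [hij, hi])) (P * X j ^ l)
      simp only [hψ]
      rw [integral_mul_const, h1, zero_mul]
    set B := ∫ y, f y ^ 2 ∂μ
    have hB : 0 ≤ B := integral_nonneg fun y => sq_nonneg _
    set D := √(B * |C|) + 1
    have hD : 0 < D := by positivity
    have hbound : ∀ l τ, ‖ψ l τ‖ ≤ D * M l := by
      intro l τ
      have h1 : ‖ψ l τ‖ ≤ ∫ y, |f y * eval y (P * X j ^ l)| ∂μ := by
        refine (norm_integral_le_integral_norm _).trans (le_of_eq ?_)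
        exact integral_congr_ae (Filter.Eventually.of_forall (hnorm l τ))
      have h2 := sq_integral_abs_mul_le hf (hpoly (P * X j ^ l))
      have h3 : (∫ y, |f y * eval y (P * X j ^ l)| ∂μ) ^ 2 ≤ (√(B * |C|) * M l) ^ 2 := by
        rw [mul_pow, Real.sq_sqrt (by positivity), mul_assoc]
        refine h2.trans (mul_le_mul_of_nonneg_left ((hC l).trans ?_) hB)
        exact mul_le_mul_of_nonneg_right (le_abs_self C) (sq_nonneg _)
      have h4 := abs_le_of_sq_le_sq h3 (mul_nonneg (Real.sqrt_nonneg _) (hM l).le)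
      calc _ ≤ _ := h1
        _ ≤ _ := (le_abs_self _).trans h4
        _ ≤ D * M l := mul_le_mul_of_nonneg_right (lt_add_one _).le (hM l).le
    have hfin := quasiAnalytic_zero hderiv (M := fun l => D * M l) (fun l => mul_pos hD (hM l))
      (fun l => by
        have := mul_le_mul_of_nonneg_left (hlog l) (sq_nonneg D)
        nlinarith [this]) hbound
      (by
        convert hdiv using 3 with l
        exact mul_div_mul_left _ _ hD.ne')
      hzero (t j)
    have hTt : T (t j) = t := Function.update_eq_self j t
    simpa [hψ, hTt] using hfin

theorem ae_eq_zero_of_orthogonal_polynomials {m : ℕ} {μ : Measure (Fin m → ℝ)} [IsFiniteMeasure μ]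
    (hpoly : ∀ P : MvPolynomial (Fin m) ℝ, MemLp (fun y => eval y P) 2 μ)
    (hqa : ∀ j, QuasiAnalyticMoments μ j) {f : (Fin m → ℝ) → ℝ} (hf : MemLp f 2 μ)
    (horth : ∀ P : MvPolynomial (Fin m) ℝ, ∫ y, f y * eval y P ∂μ = 0) : f =ᵐ[μ] 0 := by
  refine ae_eq_zero_of_fourier_eq_zero (hf.integrable (by norm_num)) fun t => ?_
  simpa using integral_mul_exp_eq_zero hpoly hqa hf horth univ t (by simp) 1

/-- Density of polynomials in `L²`, phrased without quotients. -/
theorem exists_polynomial_integral_sq_sub_lt {m : ℕ} {μ : Measure (Fin m → ℝ)} [IsFiniteMeasure μ]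
    (hpoly : ∀ P : MvPolynomial (Fin m) ℝ, MemLp (fun y => eval y P) 2 μ)
    (hqa : ∀ j, QuasiAnalyticMoments μ j) {φ : (Fin m → ℝ) → ℝ} (hφ : MemLp φ 2 μ)
    {δ : ℝ} (hδ : 0 < δ) :
    ∃ P : MvPolynomial (Fin m) ℝ, ∫ y, (φ y - eval y P) ^ 2 ∂μ < δ := by
  let K : Submodule ℝ (Lp ℝ 2 μ) :=
    { carrier := Set.range fun P : MvPolynomial (Fin m) ℝ => (hpoly P).toLp _
      add_mem' := by
        rintro _ _ ⟨P, rfl⟩ ⟨R, rfl⟩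
        refine ⟨P + R, ?_⟩
        rw [← MemLp.toLp_add]
        exact MemLp.toLp_congr _ _ (Filter.Eventually.of_forall fun y => by simp)
      zero_mem' := ⟨0, by
        rw [← MemLp.toLp_zero (MemLp.zero' (ε := ℝ) (p := 2) (μ := μ))]
        exact MemLp.toLp_congr _ _ (Filter.Eventually.of_forall fun y => by simp)⟩
      smul_mem' := by
        rintro c _ ⟨P, rfl⟩
        refine ⟨c • P, ?_⟩
        rw [← MemLp.toLp_const_smul]
        exact MemLp.toLp_congr _ _ (Filter.Eventually.of_forall fun y => by simp [smul_eval]) }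
  have hK : K.topologicalClosure = ⊤ := by
    rw [Submodule.topologicalClosure_eq_top_iff, Submodule.eq_bot_iff]
    intro f hf
    have h1 : (f : (Fin m → ℝ) → ℝ) =ᵐ[μ] 0 := by
      refine ae_eq_zero_of_orthogonal_polynomials hpoly hqa (Lp.memLp f) fun P => ?_
      have h2 := (Submodule.mem_orthogonal K f).1 hf _ ⟨P, rfl⟩
      rw [L2.inner_def] at h2
      rw [← h2]
      refine integral_congr_ae ?_
      filter_upwards [(hpoly P).coeFn_toLp] with y hy
      simp [hy]
    exact Lp.eq_zero_iff_ae_eq_zero.2 h1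
  have hmem : hφ.toLp φ ∈ closure (K : Set (Lp ℝ 2 μ)) := by
    have : hφ.toLp φ ∈ K.topologicalClosure := by rw [hK]; trivial
    exact this
  obtain ⟨_, ⟨P, rfl⟩, hP⟩ := Metric.mem_closure_iff.1 hmem (√δ) (Real.sqrt_pos.2 hδ)
  refine ⟨P, ?_⟩
  rw [dist_eq_norm] at hP
  have h3 : ‖hφ.toLp φ - (hpoly P).toLp _‖ ^ 2 = ∫ y, (φ y - eval y P) ^ 2 ∂μ := by
    rw [← real_inner_self_eq_norm_sq, L2.inner_def]
    refine integral_congr_ae ?_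
    filter_upwards [Lp.coeFn_sub (hφ.toLp φ) ((hpoly P).toLp _), (hpoly P).coeFn_toLp,
      hφ.coeFn_toLp] with y h1 h2 h3
    rw [h1, Pi.sub_apply, h2, h3, real_inner_self_eq_norm_sq, Real.norm_eq_abs, sq_abs]
  rw [← h3]
  calc _ < √δ ^ 2 := by gcongr
    _ = δ := Real.sq_sqrt hδ.le

theorem geom_mean_succ_le {b : ℕ → ℝ} (hb : ∀ k, 0 < b k) (j : ℕ) :
    ((j : ℝ) + 2) * (∏ i ∈ range (j + 2), b i) ^ (1 / ((j : ℝ) + 2)) +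
      1 / 2 * (∏ i ∈ range (j + 1), b i) ^ (1 / ((j : ℝ) + 1)) ≤
    ((j : ℝ) + 1) * (∏ i ∈ range (j + 1), b i) ^ (1 / ((j : ℝ) + 1)) +
      Real.exp 1 * b (j + 1) := by
  rw [Finset.prod_range_succ _ (j + 1)]
  set P := ∏ i ∈ range (j + 1), b i
  have hP : 0 < P := Finset.prod_pos fun i _ => hb i
  have hj1 : (0 : ℝ) < (j : ℝ) + 1 := by positivity
  have hj2 : (0 : ℝ) < (j : ℝ) + 2 := by positivity
  set μ : ℝ := ((j : ℝ) + 1) / ((j : ℝ) + 2) with hμ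
  have hμ0 : 0 < μ := by positivity
  have hb1 := hb (j + 1)
  set g := P ^ (1 / ((j : ℝ) + 1)) with hg
  have hg0 : 0 < g := Real.rpow_pos_of_pos hP _
  have amgm := Real.geom_mean_le_arith_mean2_weighted (w₁ := μ) (w₂ := 1 / ((j : ℝ) + 2))
    (p₁ := μ * g) (p₂ := (μ ^ (j + 1))⁻¹ * b (j + 1)) hμ0.le (by positivity) (by positivity)
    (by positivity) (by rw [hμ]; field_simp; ring)
  have h1 : (μ * g) ^ μ * ((μ ^ (j + 1))⁻¹ * b (j + 1)) ^ (1 / ((j : ℝ) + 2)) =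
      (P * b (j + 1)) ^ (1 / ((j : ℝ) + 2)) := by
    have e1 : g ^ μ = P ^ (1 / ((j : ℝ) + 2)) := by
      rw [hg, ← Real.rpow_mul hP.le]; congr 1; rw [hμ]; field_simp
    have e2 : ((μ ^ (j + 1))⁻¹) ^ (1 / ((j : ℝ) + 2)) = (μ ^ μ)⁻¹ := by
      rw [Real.inv_rpow (by positivity), ← Real.rpow_natCast, ← Real.rpow_mul hμ0.le]
      congr 2; rw [hμ]; push_cast; ring
    rw [Real.mul_rpow hμ0.le hg0.le, Real.mul_rpow (by positivity) hb1.le, e1, e2,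
      Real.mul_rpow hP.le hb1.le]
    have : μ ^ μ ≠ 0 := (Real.rpow_pos_of_pos hμ0 _).ne'
    field_simp
  rw [h1] at amgm
  have h2 : (μ ^ (j + 1))⁻¹ ≤ Real.exp 1 := by
    rw [← inv_pow]
    have h3 : μ⁻¹ ≤ Real.exp (1 / ((j : ℝ) + 1)) := by
      have := Real.add_one_le_exp (1 / ((j : ℝ) + 1))
      refine le_trans (le_of_eq ?_) this
      rw [hμ]; field_simp; ring
    calc _ ≤ Real.exp (1 / ((j : ℝ) + 1)) ^ (j + 1) := by gcongr
      _ = Real.exp 1 := by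
        rw [← Real.exp_nat_mul]; congr 1; push_cast; field_simp
  have h4 : ((j : ℝ) + 2) * (P * b (j + 1)) ^ (1 / ((j : ℝ) + 2)) ≤
      ((j : ℝ) + 2) * μ * (μ * g) + (μ ^ (j + 1))⁻¹ * b (j + 1) := by
    calc _ ≤ ((j : ℝ) + 2) * (μ * (μ * g) + 1 / ((j : ℝ) + 2) * ((μ ^ (j + 1))⁻¹ * b (j + 1))) := by
          gcongr
      _ = _ := by field_simp
  have h5 : ((j : ℝ) + 2) * μ * (μ * g) + 1 / 2 * g ≤ ((j : ℝ) + 1) * g := by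
    have : ((j : ℝ) + 2) * μ * μ + 1 / 2 ≤ (j : ℝ) + 1 := by
      have e : ((j : ℝ) + 2) * μ * μ = ((j : ℝ) + 1) ^ 2 / ((j : ℝ) + 2) := by
        rw [hμ]; field_simp
      rw [e, ← le_sub_iff_add_le, div_le_iff₀ hj2]
      nlinarith [Nat.cast_nonneg (α := ℝ) j]
    nlinarith
  nlinarith [mul_le_mul_of_nonneg_right h2 hb1.le]

/-- Carleman's inequality, qualitatively. -/
theorem summable_geom_mean {b : ℕ → ℝ} (hb : ∀ k, 0 < b k) (hs : Summable b) :
    Summable fun j : ℕ => (∏ i ∈ range (j + 1), b i) ^ (1 / ((j : ℝ) + 1)) := by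
  set g : ℕ → ℝ := fun j => (∏ i ∈ range (j + 1), b i) ^ (1 / ((j : ℝ) + 1)) with hg
  have hg0 : ∀ j, 0 ≤ g j := fun j => (Real.rpow_pos_of_pos (Finset.prod_pos fun i _ => hb i) _).le
  have key : ∀ n : ℕ, ∑ j ∈ range n, 1 / 2 * g j + ((n : ℝ) + 1) * g n ≤
      g 0 + Real.exp 1 * ∑ j ∈ range n, b (j + 1) := by
    intro n
    induction n with
    | zero => simp
    | succ n ih =>
      have h1 := geom_mean_succ_le hb n
      have h2 : g (n + 1) = (∏ i ∈ range (n + 2), b i) ^ (1 / ((n : ℝ) + 2)) := by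
        simp only [hg]; push_cast; ring_nf
      rw [← h2] at h1
      rw [Finset.sum_range_succ, Finset.sum_range_succ, mul_add]
      push_cast
      have h3 : g n = (∏ i ∈ range (n + 1), b i) ^ (1 / ((n : ℝ) + 1)) := rfl
      rw [← h3] at h1
      linarith
  have hs1 : Summable fun j => b (j + 1) := (summable_nat_add_iff 1).2 hs
  refine summable_of_sum_range_le (c := 2 * (g 0 + Real.exp 1 * ∑' j, b (j + 1))) hg0 fun n => ?_
  have h1 := key n
  have h2 := hs1.sum_le_tsum (range n) fun j _ => (hb (j + 1)).le
  rw [← Finset.mul_sum] at h1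
  have h3 : 0 ≤ ((n : ℝ) + 1) * g n := mul_nonneg (by positivity) (hg0 n)
  have h4 := mul_le_mul_of_nonneg_left h2 (Real.exp_pos 1).le
  linarith

theorem not_summable_sqrt_ratio {s : ℕ → ℝ} (hs : ∀ k, 0 < s k)
    (hc : ¬ Summable fun d : ℕ => s (d + 1) ^ (-(1 : ℝ) / (2 * (d + 1)))) :
    ¬ Summable fun k => √(s k / s (k + 1)) := by
  intro hsum
  apply hc
  have hpos : ∀ k, 0 < √(s k / s (k + 1)) := fun k => Real.sqrt_pos.2 (div_pos (hs _) (hs _))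
  have h1 := summable_geom_mean hpos hsum
  have hprod : ∀ n, ∏ i ∈ range n, √(s i / s (i + 1)) = √(s 0 / s n) := by
    intro n
    induction n with
    | zero => simp [div_self (hs 0).ne']
    | succ n ih =>
      rw [Finset.prod_range_succ, ih, ← Real.sqrt_mul (div_pos (hs _) (hs _)).le]
      have := (hs n).ne'
      congr 1
      field_simp
  refine Summable.of_nonneg_of_le (fun d => Real.rpow_nonneg (hs _).le _) (fun d => ?_)
    (h1.mul_left (max 1 (s 0)⁻¹))
  rw [hprod, Real.sqrt_eq_rpow, ← Real.rpow_mul (div_pos (hs _) (hs _)).le,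
    Real.div_rpow (hs 0).le (hs _).le]
  have hd : (0 : ℝ) < (d : ℝ) + 1 := by positivity
  set e : ℝ := 1 / 2 * (1 / ((d : ℝ) + 1)) with he
  have he0 : 0 ≤ e := by positivity
  have he1 : e ≤ 1 := by
    rw [he]
    have : 1 / ((d : ℝ) + 1) ≤ 1 := by
      rw [div_le_one hd]; linarith [Nat.cast_nonneg (α := ℝ) d]
    linarith
  have e1 : -(1 : ℝ) / (2 * (d + 1)) = -e := by rw [he]; field_simp
  rw [e1, Real.rpow_neg (hs _).le, div_eq_mul_inv, ← mul_assoc]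
  refine le_mul_of_one_le_left (inv_nonneg.2 (Real.rpow_nonneg (hs _).le _)) ?_
  have h0 := hs 0
  rcases le_total 1 (s 0) with h | h
  · calc (1 : ℝ) ≤ 1 * s 0 ^ e := by rw [one_mul]; exact Real.one_le_rpow h he0
      _ ≤ _ := by gcongr; exact le_max_left _ _
  · calc (1 : ℝ) = (s 0)⁻¹ * s 0 := (inv_mul_cancel₀ h0.ne').symm
      _ ≤ (s 0)⁻¹ * s 0 ^ e := by
        gcongr
        simpa using Real.rpow_le_rpow_of_exponent_ge h0 h he1
      _ ≤ _ := by gcongr; exact le_max_right _ _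

section Moments

variable {m : ℕ} {ν : Measure (Fin m → ℝ)}

theorem continuous_eval_poly (P : MvPolynomial (Fin m) ℝ) : Continuous fun y => eval y P :=
  MvPolynomial.continuous_eval P

theorem momentsFinite.integrable (hmom : momentsFinite ν) (P : MvPolynomial (Fin m) ℝ) :
    Integrable (fun y => eval y P) ν :=
  (integrable_norm_iff (continuous_eval_poly P).aestronglyMeasurable).1 (hmom P)

theorem momentsFinite.isFiniteMeasure (hmom : momentsFinite ν) : IsFiniteMeasure ν := by
  have h := hmom.integrable 1
  simp only [map_one] at h
  simpa [integrable_const_iff] using h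

theorem momentsFinite.memLp (hmom : momentsFinite ν) (P : MvPolynomial (Fin m) ℝ) :
    MemLp (fun y => eval y P) 2 ν := by
  rw [memLp_two_iff_integrable_sq (continuous_eval_poly P).aestronglyMeasurable]
  exact (hmom.integrable (P ^ 2)).congr (Filter.Eventually.of_forall fun y => map_pow _ _ _)

theorem Carleman.moment_pos (hcar : Carleman ν) (hmom : momentsFinite ν) (j : Fin m) (k : ℕ) :
    0 < ∫ y, (y j) ^ (2 * k) ∂ν := by
  have hnn : 0 ≤ fun y : Fin m → ℝ => (y j) ^ (2 * k) := fun y => by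
    simp only [pow_mul]; positivity
  refine lt_of_le_of_ne (integral_nonneg hnn) fun h0 => ?_
  have hint : Integrable (fun y : Fin m → ℝ => (y j) ^ (2 * k)) ν := by
    simpa using hmom.integrable (X j ^ (2 * k))
  have hae := (integral_eq_zero_iff_of_nonneg hnn hint).1 h0.symm
  refine hcar j ?_
  have hz : ∀ d : ℕ, ∫ y, (y j) ^ (2 * (d + 1)) ∂ν = 0 := by
    intro d
    refine integral_eq_zero_of_ae ?_
    filter_upwards [hae] with y hy
    have : y j = 0 := eq_zero_of_pow_eq_zero hy
    simp [this]
  have hzero : (fun d : ℕ => (∫ y, (y j) ^ (2 * (d + 1)) ∂ν) ^ (-(1 : ℝ) / (2 * (d + 1)))) =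
      fun _ => 0 := by
    funext d
    rw [hz d, Real.zero_rpow]
    have : (0 : ℝ) < 2 * ((d : ℝ) + 1) := by positivity
    exact div_ne_zero (by norm_num) this.ne'
  rw [hzero]
  exact summable_zero

theorem moment_logConvex (hmom : momentsFinite ν) (j : Fin m) (k l : ℕ) :
    (∫ y, (y j) ^ (2 * (k + l)) ∂ν) ^ 2 ≤
      (∫ y, (y j) ^ (2 * k) ∂ν) * ∫ y, (y j) ^ (2 * (k + 2 * l)) ∂ν := by
  have h := sq_integral_abs_mul_le (hmom.memLp (X j ^ k)) (hmom.memLp (X j ^ (k + 2 * l)))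
  simp only [map_pow, eval_X] at h
  convert h using 2
  · congr 1
    funext y
    rw [← pow_add, show k + (k + 2 * l) = 2 * (k + l) by ring, pow_mul, abs_of_nonneg]
    positivity
  · congr 1; funext y; ring
  · congr 1; funext y; ring

/-- The measure with polynomial density `1 + g²`. -/
noncomputable def tilt (ν : Measure (Fin m → ℝ)) (g : MvPolynomial (Fin m) ℝ) :
    Measure (Fin m → ℝ) :=
  ν.withDensity fun y => ENNReal.ofReal (eval y (1 + g ^ 2))

theorem one_le_eval_tilt (g : MvPolynomial (Fin m) ℝ) (y : Fin m → ℝ) :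
    1 ≤ eval y (1 + g ^ 2) := by
  simp only [map_add, map_one, map_pow]
  nlinarith [sq_nonneg (eval y g)]

theorem integral_tilt (g : MvPolynomial (Fin m) ℝ) (f : (Fin m → ℝ) → ℝ) :
    ∫ y, f y ∂(tilt ν g) = ∫ y, eval y (1 + g ^ 2) * f y ∂ν := by
  rw [tilt, integral_withDensity_eq_integral_toReal_smul
    (continuous_eval_poly _).measurable.ennreal_ofReal (by simp)]
  refine integral_congr_ae (Filter.Eventually.of_forall fun y => ?_)
  simp only [ENNReal.toReal_ofReal (zero_le_one.trans (one_le_eval_tilt g y)), smul_eq_mul]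

theorem integrable_tilt_iff (g : MvPolynomial (Fin m) ℝ) {f : (Fin m → ℝ) → ℝ} :
    Integrable f (tilt ν g) ↔ Integrable (fun y => eval y (1 + g ^ 2) * f y) ν := by
  rw [tilt, integrable_withDensity_iff_integrable_smul'
    (continuous_eval_poly _).measurable.ennreal_ofReal (by simp)]
  simp only [ENNReal.toReal_ofReal (zero_le_one.trans (one_le_eval_tilt g _)), smul_eq_mul]

theorem momentsFinite.tilt (hmom : momentsFinite ν) (g : MvPolynomial (Fin m) ℝ) :
    momentsFinite (tilt ν g) := by
  intro P
  refine Integrable.abs ?_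
  rw [integrable_tilt_iff]
  exact (hmom.integrable ((1 + g ^ 2) * P)).congr
    (Filter.Eventually.of_forall fun y => map_mul _ _ _)

theorem Carleman.quasiAnalyticMoments_tilt (hcar : Carleman ν) (hmom : momentsFinite ν)
    (g : MvPolynomial (Fin m) ℝ) (j : Fin m) : QuasiAnalyticMoments (tilt ν g) j := by
  set s : ℕ → ℝ := fun k => ∫ y, (y j) ^ (2 * k) ∂ν with hs
  have hs0 : ∀ k, 0 < s k := hcar.moment_pos hmom j
  have hlog1 : ∀ k, s (k + 1) ^ 2 ≤ s k * s (k + 2) := fun k => moment_logConvex hmom j k 1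
  have hlog2 : ∀ k, s (k + 2) ^ 2 ≤ s k * s (k + 4) := fun k => moment_logConvex hmom j k 2
  have hb := not_summable_sqrt_ratio hs0 (hcar j)
  have hanti : Antitone fun k => √(s k / s (k + 1)) := fun a b hab =>
    Real.sqrt_le_sqrt (logConvex_ratio_mono hs0 hlog1 hab)
  refine ⟨fun l => √√(s (2 * l)), fun l => Real.sqrt_pos.2 (Real.sqrt_pos.2 (hs0 _)),
    fun l => ?_, fun hsum => ?_, fun P => ?_⟩
  · rw [Real.sq_sqrt (Real.sqrt_nonneg _), ← Real.sqrt_mul (Real.sqrt_nonneg _),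
      ← Real.sqrt_mul (hs0 _).le]
    refine Real.le_sqrt_of_sq_le ?_
    rw [Real.sq_sqrt (hs0 _).le]
    exact Real.le_sqrt_of_sq_le (hlog2 (2 * l))
  · have hodd : Summable fun l => √(s (2 * l + 1) / s (2 * l + 1 + 1)) := by
      refine Summable.of_nonneg_of_le (fun l => Real.sqrt_nonneg _) (fun l => ?_) hsum
      rw [← Real.sqrt_div (Real.sqrt_nonneg _), ← Real.sqrt_div (hs0 _).le]
      refine Real.sqrt_le_sqrt (Real.le_sqrt_of_sq_le ?_)
      have h1 := logConvex_ratio_mono hs0 hlog1 (Nat.le_succ (2 * l))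
      simp only [Nat.succ_eq_add_one] at h1
      have h2 : 0 < s (2 * l + 1) / s (2 * l + 1 + 1) := div_pos (hs0 _) (hs0 _)
      calc _ = s (2 * l + 1) / s (2 * l + 1 + 1) * (s (2 * l + 1) / s (2 * l + 1 + 1)) := sq _
        _ ≤ s (2 * l) / s (2 * l + 1) * (s (2 * l + 1) / s (2 * l + 1 + 1)) := by gcongr
        _ = _ := by
          have := (hs0 (2 * l + 1)).ne'
          rw [show 2 * (l + 1) = 2 * l + 1 + 1 by ring]
          field_simp
    have heven : Summable fun l => √(s (2 * l) / s (2 * l + 1)) := by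
      rw [← summable_nat_add_iff 1]
      exact Summable.of_nonneg_of_le (fun l => Real.sqrt_nonneg _)
        (fun l => hanti (show 2 * l + 1 ≤ 2 * (l + 1) by omega)) hodd
    exact hb (Summable.even_add_odd heven hodd)
  · set R := (1 + g ^ 2) * P ^ 2
    refine ⟨√(∫ y, eval y R ^ 2 ∂ν), fun l => ?_⟩
    rw [Real.sq_sqrt (Real.sqrt_nonneg _), ← Real.sqrt_mul (integral_nonneg fun y => sq_nonneg _),
      integral_tilt]
    refine Real.le_sqrt_of_sq_le ?_
    have h := sq_integral_abs_mul_le (hmom.memLp R) (hmom.memLp (X j ^ (2 * l)))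
    convert h using 2
    · congr 1; funext y
      rw [abs_of_nonneg]
      · simp only [R, map_mul, map_pow, eval_X]; ring
      · simp only [R, map_mul, map_pow, eval_X, pow_mul]
        have := zero_le_one.trans (one_le_eval_tilt g y)
        positivity
    · simp only [hs]; congr 1; funext y; simp only [map_pow, eval_X]; ring

/-- Under Carleman's condition, nonnegativity of `g ν` on squares of polynomials forces `g` to be
nonnegative on the support of `ν`. -/
theorem nonneg_of_integral_sq_mul_nonneg {Y : Set (Fin m → ℝ)} (hsupp : hasSupport ν Y)
    (hmom : momentsFinite ν) (hcar : Carleman ν) (g : MvPolynomial (Fin m) ℝ)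
    (hg : ∀ h : MvPolynomial (Fin m) ℝ, 0 ≤ ∫ y, eval y h ^ 2 * eval y g ∂ν) :
    ∀ y ∈ Y, 0 ≤ eval y g := by
  intro y₀ hy₀
  by_contra! hlt
  set U := {y : Fin m → ℝ | eval y g < 0} with hU
  have hUo : IsOpen U := isOpen_lt (continuous_eval_poly g) continuous_const
  have hνU : 0 < ν U := hsupp.2 U hUo ⟨y₀, hlt, hy₀⟩
  have hmom' := hmom.tilt g
  have := hmom.isFiniteMeasure
  have := hmom'.isFiniteMeasure
  set φ : (Fin m → ℝ) → ℝ := U.indicator 1 with hφ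
  have hφmeas : Measurable φ := measurable_one.indicator hUo.measurableSet
  have hφL : MemLp φ 2 (tilt ν g) :=
    (memLp_const (1 : ℝ)).indicator hUo.measurableSet
  have hφsq : ∀ y, φ y ^ 2 = φ y := fun y => by
    by_cases hy : y ∈ U <;> simp [hφ, hy]
  have hintφ : Integrable (fun y => φ y ^ 2 * eval y g) ν := by
    have : (fun y => φ y ^ 2 * eval y g) = U.indicator fun y => eval y g := by
      funext y
      by_cases hy : y ∈ U <;> simp [hφ, hy]
    rw [this]
    exact (hmom.integrable g).indicator hUo.measurableSet
  set E := ∫ y, φ y ^ 2 * eval y g ∂ν with hE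
  have hEneg : E < 0 := by
    have h1 : 0 < ∫ y, -(φ y ^ 2 * eval y g) ∂ν := by
      rw [integral_pos_iff_support_of_nonneg]
      · refine hνU.trans_le (measure_mono fun y hy => ?_)
        have : eval y g < 0 := hy
        simp [hφ, hy, this.ne]
      · intro y
        by_cases hy : y ∈ U
        · have : eval y g < 0 := hy
          simp [hφ, hy, this.le]
        · simp [hφ, hy]
      · exact hintφ.neg
    rw [integral_neg] at h1
    linarith
  set A := ∫ y, φ y ^ 2 ∂(tilt ν g) with hA
  have hA0 : 0 ≤ A := integral_nonneg fun y => sq_nonneg _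
  set δ := min 1 (E ^ 2 / (2 + 8 * A)) with hδ
  have hδ0 : 0 < δ := lt_min one_pos (div_pos (by nlinarith) (by positivity))
  obtain ⟨P, hP⟩ := exists_polynomial_integral_sq_sub_lt hmom'.memLp
    (hcar.quasiAnalyticMoments_tilt hmom g) hφL hδ0
  set I := ∫ y, (φ y - eval y P) ^ 2 ∂(tilt ν g) with hI
  have hI0 : 0 ≤ I := integral_nonneg fun y => sq_nonneg _
  have hPL := hmom'.memLp P
  have hsub : MemLp (fun y => φ y - eval y P) 2 (tilt ν g) := hφL.sub hPL
  have hadd : MemLp (fun y => φ y + eval y P) 2 (tilt ν g) := hφL.add hPL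
  have hJ : ∫ y, (φ y + eval y P) ^ 2 ∂(tilt ν g) ≤ 2 * I + 8 * A := by
    rw [hI, hA, ← integral_const_mul, ← integral_const_mul, ← integral_add
      (hsub.integrable_sq.const_mul _) (hφL.integrable_sq.const_mul _)]
    refine integral_mono hadd.integrable_sq
      ((hsub.integrable_sq.const_mul _).add (hφL.integrable_sq.const_mul _)) fun y => ?_
    simp only
    nlinarith [sq_nonneg (3 * φ y - eval y P)]
  have hintP : Integrable (fun y => eval y P ^ 2 * eval y g) ν := by
    refine (hmom.integrable (P ^ 2 * g)).congr (Filter.Eventually.of_forall fun y => ?_)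
    simp only [map_mul, map_pow]
  have hdiff : |E - ∫ y, eval y P ^ 2 * eval y g ∂ν| ≤
      ∫ y, |(φ y - eval y P) * (φ y + eval y P)| ∂(tilt ν g) := by
    rw [hE, ← integral_sub hintφ hintP, integral_tilt]
    refine (abs_integral_le_integral_abs).trans (integral_mono (hintφ.sub hintP).abs
      ((integrable_tilt_iff g).1 (hsub.integrable_mul hadd).abs) fun y => ?_)
    simp only
    rw [← sub_mul, abs_mul, mul_comm, show φ y ^ 2 - eval y P ^ 2 =
      (φ y - eval y P) * (φ y + eval y P) by ring]
    refine mul_le_mul_of_nonneg_right ?_ (abs_nonneg _)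
    simp only [map_add, map_one, map_pow]
    refine abs_le.2 ⟨?_, ?_⟩ <;> nlinarith [sq_nonneg (eval y g + 1), sq_nonneg (eval y g - 1)]
  have hcs := sq_integral_abs_mul_le hsub hadd
  have hsq : (E - ∫ y, eval y P ^ 2 * eval y g ∂ν) ^ 2 < E ^ 2 := by
    have hI1 : I < 1 := hP.trans_le (min_le_left _ _)
    have hI2 : I * (2 + 8 * A) < E ^ 2 := by
      rw [← lt_div_iff₀ (by positivity)]
      exact hP.trans_le (min_le_right _ _)
    calc (E - ∫ y, eval y P ^ 2 * eval y g ∂ν) ^ 2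
        = |E - ∫ y, eval y P ^ 2 * eval y g ∂ν| ^ 2 := (sq_abs _).symm
      _ ≤ (∫ y, |(φ y - eval y P) * (φ y + eval y P)| ∂(tilt ν g)) ^ 2 := by gcongr
      _ ≤ I * (2 * I + 8 * A) := hcs.trans (mul_le_mul_of_nonneg_left hJ hI0)
      _ ≤ I * (2 + 8 * A) := by gcongr; linarith
      _ < E ^ 2 := hI2
  have := hg P
  nlinarith

end Moments


section PureStates

variable {A V : Type*} [CommRing A] [Algebra ℝ A] [AddCommGroup V] [Module A V] [Module ℝ V]

/-- The states of the cone `Q` with order unit `e`, as functions on the ambient space. -/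
def stateSet (Q : Set V) (e : V) : Set (V → ℝ) :=
  {f | (∀ v w, f (v + w) = f v + f w) ∧ (∀ (c : ℝ) v, f (c • v) = c * f v) ∧
    (∀ w ∈ Q, 0 ≤ f w) ∧ f e = 1}

theorem isCompact_stateSet {Q : Set V} {e : V} (hunit : ∀ v, ∃ c : ℝ, c • e - v ∈ Q) :
    IsCompact (stateSet Q e) := by
  choose c hc using hunit
  have hK : IsCompact (Set.univ.pi fun v => Set.Icc (-c (-v)) (c v)) :=
    isCompact_univ_pi fun v => isCompact_Icc
  refine hK.of_isClosed_subset ?_ fun f hf v _ => ?_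
  · have h1 : IsClosed {f : V → ℝ | ∀ v w, f (v + w) = f v + f w} := by
      simp only [Set.ofPred_forall]
      exact isClosed_iInter fun v => isClosed_iInter fun w =>
        isClosed_eq (continuous_apply _) ((continuous_apply v).fun_add (continuous_apply w))
    have h2 : IsClosed {f : V → ℝ | ∀ (c : ℝ) v, f (c • v) = c * f v} := by
      simp only [Set.ofPred_forall]
      exact isClosed_iInter fun r => isClosed_iInter fun w =>
        isClosed_eq (continuous_apply _) (continuous_const.mul (continuous_apply _))
    have h3 : IsClosed {f : V → ℝ | ∀ w ∈ Q, 0 ≤ f w} := by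
      simp only [Set.ofPred_forall]
      exact isClosed_iInter fun w => isClosed_iInter fun _ =>
        isClosed_le continuous_const (continuous_apply _)
    have h4 : IsClosed {f : V → ℝ | f e = 1} :=
      isClosed_eq (continuous_apply _) continuous_const
    exact h1.inter (h2.inter (h3.inter h4))
  · obtain ⟨ha, hs, hp, he⟩ := hf
    have hneg : ∀ u, f (-u) = -f u := fun u => by
      rw [← neg_one_smul ℝ u, hs]; ring
    have h := hp _ (hc v)
    have h' := hp _ (hc (-v))
    rw [sub_eq_add_neg, ha, hs, he, hneg] at h h'
    rw [hneg] at h'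
    exact ⟨by linarith, by linarith⟩

theorem exists_state_nonpos {Q : Set V} {e v : V} (h0 : (0 : V) ∈ Q)
    (hadd : ∀ u ∈ Q, ∀ w ∈ Q, u + w ∈ Q) (hsmul : ∀ c : ℝ, 0 ≤ c → ∀ w ∈ Q, c • w ∈ Q)
    (he : e ∈ Q) (hunit : ∀ v, ∃ c : ℝ, c • e - v ∈ Q) (hv : v ∉ Q) :
    ∃ f ∈ stateSet Q e, f v ≤ 0 := by
  let C : PointedCone ℝ V :=
    { carrier := {w | ∃ t : ℝ, 0 ≤ t ∧ w + t • v ∈ Q}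
      zero_mem' := ⟨0, le_rfl, by simpa using h0⟩
      smul_mem' := by
        rintro ⟨c, hc⟩ w ⟨t, ht, hw⟩
        refine ⟨c * t, by positivity, ?_⟩
        have := hsmul c hc _ hw
        rwa [smul_add, smul_smul] at this
      add_mem' := by
        rintro u w ⟨s, hs, hu⟩ ⟨t, ht, hw⟩
        refine ⟨s + t, by positivity, ?_⟩
        have := hadd _ hu _ hw
        rwa [add_add_add_comm, ← add_smul] at this }
  have hQC : ∀ w ∈ Q, w ∈ C := fun w hw => ⟨0, le_rfl, by simpa using hw⟩
  have hne : -e ∉ C := by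
    rintro ⟨t, ht, h⟩
    rcases ht.eq_or_lt with rfl | ht
    · obtain ⟨c, hc⟩ := hunit (-v)
      rw [zero_smul, add_zero] at h
      have h1 := hadd _ hc _ (hsmul (max c 0) (le_max_right _ _) _ h)
      have h2 := hadd _ h1 _ (hsmul (max c 0 - c) (by linarith [le_max_left c 0]) _ he)
      apply hv
      convert h2 using 1
      module
    · have h1 := hsmul t⁻¹ (by positivity) _ (hadd _ h _ he)
      apply hv
      convert h1 using 1
      rw [neg_add_cancel_comm, smul_smul, inv_mul_cancel₀ ht.ne', one_smul]
  have he0 : e ≠ 0 := by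
    rintro rfl
    exact hne (by simp)
  obtain ⟨g, hg1, hg2⟩ := riesz_extension C (LinearPMap.mkSpanSingleton' (σ := RingHom.id ℝ) e (1 : ℝ)
      fun c hc => by simpa [he0] using hc) (by
      rintro ⟨x, hx⟩ hxC
      obtain ⟨c, rfl⟩ := Submodule.mem_span_singleton.1 hx
      rw [LinearPMap.mkSpanSingleton'_apply]
      by_contra hc
      have hc' : c < 0 := by simpa using hc
      apply hne
      have := C.smul_mem (inv_pos.2 (neg_pos.2 hc')).le hxC
      convert this using 1
      change -e = (-c)⁻¹ • c • e
      rw [smul_smul, show (-c)⁻¹ * c = -1 by rw [inv_neg, neg_mul, inv_mul_cancel₀ hc'.ne], neg_one_smul]) (by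
      intro y
      obtain ⟨c, hc⟩ := hunit (-y)
      refine ⟨⟨c • e, Submodule.mem_span_singleton.2 ⟨c, rfl⟩⟩, hQC _ ?_⟩
      simpa using hc)
  refine ⟨g, ⟨map_add g, fun c v => by simp, fun w hw => hg2 w (hQC w hw), ?_⟩, ?_⟩
  · have := hg1 ⟨(1 : ℝ) • e, Submodule.mem_span_singleton.2 ⟨1, rfl⟩⟩
    erw [LinearPMap.mkSpanSingleton'_apply] at this
    simpa using this
  · have := hg2 (-v) ⟨1, zero_le_one, by simpa using h0⟩
    rw [map_neg] at this
    linarith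

theorem extreme_state_mul [IsScalarTower ℝ A V] {Q : Set V} {e : V}
    (he : e ∈ Q) (hmul : ∀ a : A, ∃ c : ℝ, ∀ w ∈ Q, c • w + a • w ∈ Q)
    {f : V → ℝ} (hf : f ∈ (stateSet Q e).extremePoints ℝ) (a : A) (w : V) :
    f (a • w) = f (a • e) * f w := by
  have hcomm : ∀ (r : ℝ) (b : A) (u : V), b • r • u = r • b • u := fun r b u => by
    rw [← algebraMap_smul A r u, ← algebraMap_smul A r (b • u), smul_smul, smul_smul, mul_comm]
  obtain ⟨c₁, h₁⟩ := hmul a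
  obtain ⟨c₂, h₂⟩ := hmul (-a)
  set c := max (max c₁ c₂) 1 with hc
  have hc0 : 0 < c := lt_of_lt_of_le one_pos (le_max_right _ _)
  obtain ⟨⟨ha, hs, hp, hfe⟩, hext⟩ := mem_extremePoints.1 hf
  have hplus : ∀ u ∈ Q, 0 ≤ c * f u + f (a • u) := fun u hu => by
    have := hp _ (h₁ u hu)
    rw [ha, hs] at this
    nlinarith [hp u hu, le_max_left (max c₁ c₂) 1, le_max_left c₁ c₂]
  have hneg : ∀ u, f (-u) = -f u := fun u => by
    rw [← neg_one_smul ℝ u, hs]; ring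
  have hminus : ∀ u ∈ Q, 0 ≤ c * f u - f (a • u) := fun u hu => by
    have := hp _ (h₂ u hu)
    rw [ha, hs, neg_smul, hneg] at this
    nlinarith [hp u hu, le_max_left (max c₁ c₂) 1, le_max_right c₁ c₂]
  have key : ∀ σ : ℝ, 0 < 2 * c + σ * f (a • e) → (∀ u ∈ Q, 0 ≤ c * f u + σ * f (a • u)) →
      (fun u => (2 * c + σ * f (a • e))⁻¹ * (2 * c * f u + σ * f (a • u))) ∈ stateSet Q e := by
    intro σ hσ hpos
    refine ⟨fun u v => ?_, fun r v => ?_, fun u hu => ?_, ?_⟩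
    · simp only [smul_add, ha]; ring
    · simp only [hcomm, hs]; ring
    · have := hpos u hu
      have := hp u hu
      have : 0 ≤ 2 * c * f u + σ * f (a • u) := by nlinarith
      positivity
    · simp only [hfe, mul_one]
      exact inv_mul_cancel₀ hσ.ne'
  have hpe := hplus e he
  have hme := hminus e he
  rw [hfe] at hpe hme
  have hd1 : 0 < 2 * c + 1 * f (a • e) := by linarith
  have hd2 : 0 < 2 * c + -1 * f (a • e) := by linarith
  have k1 := key 1 hd1 fun u hu => by simpa using hplus u hu
  have k2 := key (-1) hd2 fun u hu => by simpa [sub_eq_add_neg] using hminus u hu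
  have := (hext _ k1 _ k2 ⟨(2 * c + 1 * f (a • e)) / (4 * c), (2 * c + -1 * f (a • e)) / (4 * c),
    by positivity, by positivity, by field_simp; ring, by
      funext u
      simp only [Pi.add_apply, Pi.smul_apply, smul_eq_mul]
      have e1 := mul_inv_cancel₀ hd1.ne'
      have e2 := mul_inv_cancel₀ hd2.ne'
      calc _ = ((2 * c + 1 * f (a • e)) * (2 * c + 1 * f (a • e))⁻¹ * (2 * c * f u + 1 * f (a • u))
            + (2 * c + -1 * f (a • e)) * (2 * c + -1 * f (a • e))⁻¹ *
              (2 * c * f u + -1 * f (a • u))) / (4 * c) := by ring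
        _ = f u := by rw [e1, e2]; field_simp; ring⟩).1
  have hw := congrFun this w
  rw [inv_mul_eq_iff_eq_mul₀ hd1.ne'] at hw
  linarith

/-- Separation by a pure state: it is multiplicative with respect to a character of `A`. -/
theorem exists_pure_state [IsScalarTower ℝ A V] {Q : Set V} {e v : V} (h0 : (0 : V) ∈ Q)
    (hadd : ∀ u ∈ Q, ∀ w ∈ Q, u + w ∈ Q) (hsmul : ∀ c : ℝ, 0 ≤ c → ∀ w ∈ Q, c • w ∈ Q)
    (he : e ∈ Q) (hunit : ∀ v, ∃ c : ℝ, c • e - v ∈ Q)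
    (hmul : ∀ a : A, ∃ c : ℝ, ∀ w ∈ Q, c • w + a • w ∈ Q) (hv : v ∉ Q) :
    ∃ (L : V →ₗ[ℝ] ℝ) (χ : A →ₐ[ℝ] ℝ), (∀ w ∈ Q, 0 ≤ L w) ∧ L e = 1 ∧ L v ≤ 0 ∧
      ∀ a w, L (a • w) = χ a * L w := by
  have hK := isCompact_stateSet hunit
  obtain ⟨f₀, hf₀, hf₀v⟩ := exists_state_nonpos h0 hadd hsmul he hunit hv
  obtain ⟨f₁, hf₁, hmin⟩ := hK.exists_isMinOn ⟨f₀, hf₀⟩ (continuous_apply v).continuousOn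
  have hK' : IsCompact (stateSet Q e ∩ {f | f v = f₁ v}) :=
    hK.inter_right (isClosed_eq (continuous_apply v) continuous_const)
  obtain ⟨f, hf⟩ := hK'.extremePoints_nonempty ⟨f₁, hf₁, rfl⟩
  have hfext : f ∈ (stateSet Q e).extremePoints ℝ := by
    rw [mem_extremePoints] at hf ⊢
    refine ⟨hf.1.1, fun g₁ hg₁ g₂ hg₂ hseg => ?_⟩
    have hmin' : ∀ g ∈ stateSet Q e, f₁ v ≤ g v := fun g hg => hmin hg
    obtain ⟨s, t, hs, ht, hst, hcomb⟩ := id hseg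
    have hval : s * g₁ v + t * g₂ v = f₁ v := by
      rw [← show f v = f₁ v from hf.1.2, ← hcomb]; simp
    have m1 := hmin' _ hg₁
    have m2 := hmin' _ hg₂
    have e1 : g₁ v = f₁ v := by
      have : s * (g₁ v - f₁ v) ≤ 0 := by
        have := mul_nonneg ht.le (sub_nonneg.2 m2)
        linear_combination this + hval - f₁ v * hst
      linarith [nonpos_of_mul_nonpos_right this hs]
    have e2 : g₂ v = f₁ v := by
      have : t * (g₂ v - f₁ v) ≤ 0 := by
        have := mul_nonneg hs.le (sub_nonneg.2 m1)
        linear_combination this + hval - f₁ v * hst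
      linarith [nonpos_of_mul_nonpos_right this ht]
    exact hf.2 _ ⟨hg₁, e1⟩ _ ⟨hg₂, e2⟩ hseg
  have hm := extreme_state_mul he hmul hfext
  obtain ⟨⟨⟨ha, hs, hp, hfe⟩, hfv⟩, -⟩ := hf
  refine ⟨{ toFun := f, map_add' := ha, map_smul' := hs },
    AlgHom.ofLinearMap
      { toFun := fun a : A => f (a • e)
        map_add' := fun a b => by rw [add_smul, ha]
        map_smul' := fun r a => by rw [smul_assoc, hs]; rfl } (by simp [hfe])
      (fun a b => by simp only [LinearMap.coe_mk, AddHom.coe_mk]; rw [mul_smul, hm]),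
    hp, hfe, ?_, hm⟩
  have h1 : f₁ v ≤ f₀ v := hmin hf₀
  have h2 : f v = f₁ v := hfv
  simp only [LinearMap.coe_mk, AddHom.coe_mk]
  linarith

end PureStates


section BoundedFractions

variable {n : ℕ}

/-- The polynomial `θ = 1 + ‖x‖²`. -/
noncomputable def thetaPoly (n : ℕ) : MvPolynomial (Fin n) ℝ := 1 + ∑ i, X i ^ 2

theorem eval_thetaPoly_pos (x : Fin n → ℝ) : 0 < eval x (thetaPoly n) := by
  simp only [thetaPoly, map_add, map_one, map_sum, map_pow, eval_X]
  positivity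

theorem totalDegree_thetaPoly_le : (thetaPoly n).totalDegree ≤ 2 := by
  refine (totalDegree_add _ _).trans (max_le (by simp) ?_)
  refine totalDegree_finsetSum_le fun i _ => (totalDegree_pow _ _).trans ?_
  simp

theorem totalDegree_thetaPoly_pow_le (k : ℕ) : (thetaPoly n ^ k).totalDegree ≤ 2 * k :=
  (totalDegree_pow _ _).trans (by rw [mul_comm]; gcongr; exact totalDegree_thetaPoly_le)

theorem totalDegree_mul_le' {σ : Type*} {P Q : MvPolynomial σ ℝ} {a b : ℕ}
    (hP : P.totalDegree ≤ a) (hQ : Q.totalDegree ≤ b) : (P * Q).totalDegree ≤ a + b :=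
  (totalDegree_mul _ _).trans (add_le_add hP hQ)

/-- The algebra of the bounded rational functions `P / θ ^ k` with `deg P ≤ 2 k`. -/
def boundedFractions (n : ℕ) : Subalgebra ℝ ((Fin n → ℝ) → ℝ) where
  carrier := {f | ∃ (k : ℕ) (P : MvPolynomial (Fin n) ℝ), P.totalDegree ≤ 2 * k ∧
    ∀ x, f x * eval x (thetaPoly n) ^ k = eval x P}
  mul_mem' := by
    rintro f g ⟨k, P, hP, hf⟩ ⟨l, R, hR, hg⟩
    refine ⟨k + l, P * R, by rw [mul_add]; exact totalDegree_mul_le' hP hR, fun x => ?_⟩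
    rw [map_mul, ← hf, ← hg, Pi.mul_apply]
    ring
  add_mem' := by
    rintro f g ⟨k, P, hP, hf⟩ ⟨l, R, hR, hg⟩
    refine ⟨k + l, P * thetaPoly n ^ l + R * thetaPoly n ^ k,
      (totalDegree_add _ _).trans (max_le ?_ ?_), fun x => ?_⟩
    · rw [mul_add]
      exact totalDegree_mul_le' hP (totalDegree_thetaPoly_pow_le l)
    · rw [add_comm, mul_add]
      exact totalDegree_mul_le' hR (totalDegree_thetaPoly_pow_le k)
    · rw [map_add, map_mul, map_mul, map_pow, map_pow, ← hf, ← hg, Pi.add_apply]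
      ring
  algebraMap_mem' := fun r => ⟨0, C r, by simp, fun x => by simp⟩

/-- The element `P / θ ^ N` of `boundedFractions n`. -/
noncomputable def frac (P : MvPolynomial (Fin n) ℝ) (N : ℕ) (h : P.totalDegree ≤ 2 * N) :
    boundedFractions n :=
  ⟨fun x => eval x P / eval x (thetaPoly n) ^ N, N, P, h, fun x =>
    div_mul_cancel₀ _ (pow_ne_zero _ (eval_thetaPoly_pos x).ne')⟩

theorem frac_apply (P : MvPolynomial (Fin n) ℝ) (N : ℕ) (h : P.totalDegree ≤ 2 * N)
    (x : Fin n → ℝ) : (frac P N h : (Fin n → ℝ) → ℝ) x =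
      eval x P / eval x (thetaPoly n) ^ N := rfl

theorem exists_eq_frac (a : boundedFractions n) : ∃ P N h, a = frac P N h := by
  obtain ⟨f, k, P, hP, hf⟩ := a
  exact ⟨P, k, hP, Subtype.ext (funext fun x =>
    eq_div_of_mul_eq (pow_ne_zero _ (eval_thetaPoly_pos x).ne') (hf x))⟩

theorem frac_congr {P R : MvPolynomial (Fin n) ℝ} {N K : ℕ} (hP : P.totalDegree ≤ 2 * N)
    (hR : R.totalDegree ≤ 2 * K) (h : P * thetaPoly n ^ K = R * thetaPoly n ^ N) :
    frac P N hP = frac R K hR := by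
  refine Subtype.ext (funext fun x => ?_)
  have := congrArg (eval x) h
  simp only [map_mul, map_pow] at this
  have hx := (eval_thetaPoly_pos x).ne'
  exact (div_eq_div_iff (pow_ne_zero _ hx) (pow_ne_zero _ hx)).2 this

theorem frac_mul {P R : MvPolynomial (Fin n) ℝ} {N K : ℕ} (hP : P.totalDegree ≤ 2 * N)
    (hR : R.totalDegree ≤ 2 * K) (h : (P * R).totalDegree ≤ 2 * (N + K)) :
    frac P N hP * frac R K hR = frac (P * R) (N + K) h := by
  refine Subtype.ext (funext fun x => ?_)
  change (_ / _ * (_ / _) : ℝ) = _ / _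
  rw [map_mul, pow_add, div_mul_div_comm]

theorem frac_add {P R : MvPolynomial (Fin n) ℝ} {N : ℕ} (hP : P.totalDegree ≤ 2 * N)
    (hR : R.totalDegree ≤ 2 * N) (h : (P + R).totalDegree ≤ 2 * N) :
    frac P N hP + frac R N hR = frac (P + R) N h := by
  refine Subtype.ext (funext fun x => ?_)
  change (_ / _ + _ / _ : ℝ) = _ / _
  rw [map_add, add_div]

theorem frac_zero {N : ℕ} (h : (0 : MvPolynomial (Fin n) ℝ).totalDegree ≤ 2 * N) :
    frac 0 N h = 0 :=
  Subtype.ext (funext fun x => by simp [frac_apply])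

theorem isSumSq_algebraMap {A : Type*} [CommRing A] [Algebra ℝ A] {c : ℝ} (hc : 0 ≤ c) :
    IsSumSq (algebraMap ℝ A c) := by
  rw [← Real.mul_self_sqrt hc, map_mul]
  exact IsSumSq.mul_self _

/-- Sums of squares of polynomials of degree at most `N`. -/
def SosDegLE (N : ℕ) (p : MvPolynomial (Fin n) ℝ) : Prop :=
  p ∈ AddSubmonoid.closure {f | ∃ g : MvPolynomial (Fin n) ℝ, g.totalDegree ≤ N ∧ f = g * g}

theorem SosDegLE.add {N : ℕ} {p r : MvPolynomial (Fin n) ℝ} (hp : SosDegLE N p)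
    (hr : SosDegLE N r) : SosDegLE N (p + r) := AddSubmonoid.add_mem _ hp hr

theorem SosDegLE.sq_mul {N : ℕ} {p : MvPolynomial (Fin n) ℝ} (hp : SosDegLE N p)
    {r : MvPolynomial (Fin n) ℝ} (hr : r.totalDegree ≤ 1) : SosDegLE (N + 1) (r ^ 2 * p) := by
  induction hp using AddSubmonoid.closure_induction with
  | mem f hf =>
    obtain ⟨g, hg, rfl⟩ := hf
    refine AddSubmonoid.subset_closure ⟨g * r, totalDegree_mul_le' hg hr, by ring⟩
  | zero => rw [mul_zero]; exact AddSubmonoid.zero_mem _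
  | add f g _ _ hf hg => rw [mul_add]; exact hf.add hg

theorem SosDegLE.sum {N : ℕ} {ι : Type*} {s : Finset ι} {p : ι → MvPolynomial (Fin n) ℝ}
    (hp : ∀ i ∈ s, SosDegLE N (p i)) : SosDegLE N (∑ i ∈ s, p i) := AddSubmonoid.sum_mem _ hp

theorem sosDegLE_thetaPoly_pow (N : ℕ) : SosDegLE N (thetaPoly n ^ N) := by
  induction N with
  | zero => exact AddSubmonoid.subset_closure ⟨1, by simp, by simp⟩
  | succ N ih =>
    have h : thetaPoly n ^ (N + 1) = 1 ^ 2 * thetaPoly n ^ N +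
        ∑ i, X i ^ 2 * thetaPoly n ^ N := by
      rw [← Finset.sum_mul, ← add_mul, one_pow, pow_succ']; rfl
    rw [h]
    exact (ih.sq_mul (by simp)).add (SosDegLE.sum fun i _ => ih.sq_mul (by simp))

theorem sosDegLE_thetaPoly_pow_sub_sq (N : ℕ) (d : Fin n →₀ ℕ) (hd : d.degree ≤ N) :
    SosDegLE N (thetaPoly n ^ N - monomial d 1 ^ 2) := by
  classical
  induction N generalizing d with
  | zero =>
    obtain rfl : d = 0 := (Finsupp.degree_eq_zero_iff d).1 (Nat.le_zero.1 hd)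
    have h : thetaPoly n ^ 0 - monomial 0 1 ^ 2 = 0 := by
      rw [show (monomial (0 : Fin n →₀ ℕ)) (1 : ℝ) = 1 from rfl]
      ring
    rw [h]
    exact AddSubmonoid.zero_mem _
  | succ N ih =>
    by_cases h0 : d = 0
    · subst h0
      have h : thetaPoly n ^ (N + 1) - monomial 0 1 ^ 2 =
          1 ^ 2 * (thetaPoly n ^ N - monomial 0 1 ^ 2) + ∑ i, X i ^ 2 * thetaPoly n ^ N := by
        rw [← Finset.sum_mul, pow_succ']
        nth_rewrite 1 [thetaPoly]
        rw [show (monomial (0 : Fin n →₀ ℕ)) (1 : ℝ) = 1 from rfl]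
        ring
      rw [h]
      exact ((ih 0 (by simp)).sq_mul (by simp)).add
        (SosDegLE.sum fun i _ => (sosDegLE_thetaPoly_pow N).sq_mul (by simp))
    · obtain ⟨i, hi⟩ := Finsupp.ne_iff.1 h0
      have hle : Finsupp.single i 1 ≤ d := by
        rw [Finsupp.single_le_iff]
        exact Nat.one_le_iff_ne_zero.2 hi
      obtain ⟨d', rfl⟩ := exists_add_of_le hle
      have hd' : d'.degree ≤ N := by
        rw [map_add, Finsupp.degree_single] at hd
        omega
      have hm : (monomial (Finsupp.single i 1 + d') (1 : ℝ)) = X i * monomial d' 1 := by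
        rw [X, monomial_mul, one_mul]
      have h : thetaPoly n ^ (N + 1) - monomial (Finsupp.single i 1 + d') 1 ^ 2 =
          1 ^ 2 * thetaPoly n ^ N + ∑ j ∈ univ.erase i, X j ^ 2 * thetaPoly n ^ N +
            X i ^ 2 * (thetaPoly n ^ N - monomial d' 1 ^ 2) := by
        rw [hm, ← Finset.sum_mul, pow_succ', mul_pow]
        nth_rewrite 1 [thetaPoly]
        rw [← Finset.add_sum_erase _ _ (mem_univ i)]
        ring
      rw [h]
      exact ((((sosDegLE_thetaPoly_pow N).sq_mul (by simp)).add
        (SosDegLE.sum fun j _ => (sosDegLE_thetaPoly_pow N).sq_mul (by simp)))).add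
        ((ih d' hd').sq_mul (by simp))

theorem SosDegLE.totalDegree_le {N : ℕ} {p : MvPolynomial (Fin n) ℝ} (hp : SosDegLE N p) :
    p.totalDegree ≤ 2 * N := by
  induction hp using AddSubmonoid.closure_induction with
  | mem f hf =>
    obtain ⟨g, hg, rfl⟩ := hf
    rw [two_mul]
    exact totalDegree_mul_le' hg hg
  | zero => simp
  | add f g _ _ hf hg => exact (totalDegree_add _ _).trans (max_le hf hg)

theorem SosDegLE.isSumSq_frac {k : ℕ} {p : MvPolynomial (Fin n) ℝ} (hp : SosDegLE (2 * k) p)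
    (h : p.totalDegree ≤ 2 * (k + k)) : IsSumSq (frac p (k + k) h) := by
  induction hp using AddSubmonoid.closure_induction with
  | mem f hf =>
    obtain ⟨g, hg, rfl⟩ := hf
    rw [← frac_mul hg hg]
    exact IsSumSq.mul_self _
  | zero =>
    rw [frac_zero]
    exact IsSumSq.zero
  | add f g hf' hg' hf hg =>
    have h1 := SosDegLE.totalDegree_le hf'
    have h2 := SosDegLE.totalDegree_le hg'
    rw [← frac_add (by omega) (by omega)]
    exact (hf _).add (hg _)

theorem isSumSq_one_add_of_sub_sq {A : Type*} [CommRing A] [Algebra ℝ A] {a : A}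
    (h : IsSumSq (1 - a * a)) : IsSumSq (1 + a) := by
  have h2 : IsSumSq (algebraMap ℝ A (1 / 2) * (1 - a * a + (1 + a) * (1 + a))) :=
    (isSumSq_algebraMap (by norm_num)).mul (h.add (IsSumSq.mul_self _))
  convert h2 using 1
  have e : algebraMap ℝ A (1 / 2) * 2 = 1 := by
    rw [← map_ofNat (algebraMap ℝ A) 2, ← map_mul]; norm_num
  linear_combination -(1 + a) * e

theorem isSumSq_one_add_frac_monomial (k : ℕ) (d : Fin n →₀ ℕ) (σ : ℝ) (hσ : σ * σ = 1)
    (h : (monomial d σ).totalDegree ≤ 2 * k) :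
    IsSumSq (1 + frac (monomial d σ) k h) := by
  have hσ0 : σ ≠ 0 := by rintro rfl; simp at hσ
  have hd : d.degree ≤ 2 * k := by rwa [totalDegree_monomial _ hσ0] at h
  apply isSumSq_one_add_of_sub_sq
  have hs := sosDegLE_thetaPoly_pow_sub_sq (2 * k) d hd
  have hdeg : (thetaPoly n ^ (2 * k) - monomial d 1 ^ 2).totalDegree ≤ 2 * (k + k) := by
    have := hs.totalDegree_le
    omega
  suffices h1 : 1 - frac (monomial d σ) k h * frac (monomial d σ) k h = frac _ _ hdeg by
    rw [h1]
    exact hs.isSumSq_frac hdeg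
  refine Subtype.ext (funext fun x => ?_)
  change (1 - _ / _ * (_ / _) : ℝ) = _ / _
  have hx := (eval_thetaPoly_pos x).ne'
  have hm : eval x (monomial d σ) * eval x (monomial d σ) = eval x (monomial d 1) ^ 2 := by
    simp only [eval_monomial, one_mul]
    linear_combination (d.prod fun n e => x n ^ e) ^ 2 * hσ
  rw [map_sub, map_pow, map_pow, ← two_mul, sub_div, div_self (pow_ne_zero _ hx), ← hm,
    div_mul_div_comm, ← pow_add, two_mul]

theorem exists_isSumSq_add (a : boundedFractions n) :
    ∃ c : ℝ, 0 ≤ c ∧ IsSumSq (algebraMap ℝ _ c + a) := by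
  obtain ⟨P, N, hP, rfl⟩ := exists_eq_frac a
  have key : ∀ s : Finset (Fin n →₀ ℕ), s ⊆ P.support →
      ∃ h : (∑ d ∈ s, monomial d (P.coeff d)).totalDegree ≤ 2 * N, ∃ c : ℝ, 0 ≤ c ∧
        IsSumSq (algebraMap ℝ _ c + frac (∑ d ∈ s, monomial d (P.coeff d)) N h) := by
    intro s
    induction s using Finset.induction_on with
    | empty =>
      intro _
      refine ⟨by simp, 0, le_rfl, ?_⟩
      simp only [Finset.sum_empty, frac_zero, map_zero, add_zero]
      exact IsSumSq.zero
    | insert d s hd ih =>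
      intro hs
      obtain ⟨h, c, hc, hsq⟩ := ih ((Finset.subset_insert _ _).trans hs)
      have hdP : d ∈ P.support := hs (Finset.mem_insert_self _ _)
      have hdeg : d.degree ≤ 2 * N := (le_totalDegree hdP).trans hP
      set σ : ℝ := ((SignType.sign (P.coeff d) : SignType) : ℝ) with hσ
      have hne : P.coeff d ≠ 0 := mem_support_iff.1 hdP
      have hσ1 : σ * σ = 1 := by
        rcases lt_or_gt_of_ne hne with h | h <;> simp [hσ, h]
      have hdeg1 : ∀ r : ℝ, (monomial d r).totalDegree ≤ 2 * N := fun r =>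
        (totalDegree_monomial_le _ _).trans hdeg
      have hsum : (∑ e ∈ insert d s, monomial e (P.coeff e)).totalDegree ≤ 2 * N := by
        rw [Finset.sum_insert hd]
        exact (totalDegree_add _ _).trans (max_le (hdeg1 _) h)
      refine ⟨hsum, |P.coeff d| + c, by positivity, ?_⟩
      have h1 := (isSumSq_algebraMap (abs_nonneg (P.coeff d))).mul
        (isSumSq_one_add_frac_monomial N d σ hσ1 (hdeg1 _))
      suffices h2 : algebraMap ℝ (boundedFractions n) (|P.coeff d| + c) + frac _ _ hsum =
          algebraMap ℝ _ |P.coeff d| * (1 + frac (monomial d σ) N (hdeg1 _)) +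
            (algebraMap ℝ _ c + frac _ _ h) by
        rw [h2]
        exact h1.add hsq
      refine Subtype.ext (funext fun x => ?_)
      change (|P.coeff d| + c) + _ / _ = |P.coeff d| * (1 + _ / _) + (c + _ / _)
      rw [Finset.sum_insert hd, map_add, add_div]
      have : eval x (monomial d (P.coeff d)) = |P.coeff d| * eval x (monomial d σ) := by
        rw [eval_monomial, eval_monomial, ← mul_assoc, hσ, abs_mul_sign]
      rw [this]
      ring
  obtain ⟨h, c, hc, hsq⟩ := key P.support subset_rfl
  refine ⟨c, hc, ?_⟩
  convert hsq using 2
  exact frac_congr _ _ (by rw [← P.as_sum])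

section Characters

variable (χ : boundedFractions n →ₐ[ℝ] ℝ)

theorem character_inv_theta_nonneg : 0 ≤ χ (frac 1 1 (by simp)) := by
  have h : frac (1 : MvPolynomial (Fin n) ℝ) 1 (by simp) =
      frac 1 1 (by simp) * frac 1 1 (by simp) +
        ∑ i, frac (X i) 1 (by simp) * frac (X i) 1 (by simp) := by
    refine Subtype.ext (funext fun x => ?_)
    have hx := (eval_thetaPoly_pos x).ne'
    rw [AddMemClass.coe_add, AddSubmonoidClass.coe_finsetSum, Pi.add_apply, Finset.sum_apply]
    simp only [MulMemClass.coe_mul, Pi.mul_apply, frac_apply, pow_one, div_mul_div_comm,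
      ← Finset.sum_div, ← add_div]
    rw [div_eq_div_iff hx (mul_ne_zero hx hx)]
    simp [thetaPoly, sq]
  rw [h, map_add, map_sum]
  simp only [map_mul]
  exact add_nonneg (mul_self_nonneg _) (Finset.sum_nonneg fun i _ => mul_self_nonneg _)

theorem character_frac_eq_eval (hs : χ (frac 1 1 (by simp)) ≠ 0)
    (P : MvPolynomial (Fin n) ℝ) (N : ℕ) (h : P.totalDegree ≤ 2 * N) :
    χ (frac P N h) = eval (fun i => χ (frac (X i) 1 (by simp)) / χ (frac 1 1 (by simp))) P *
      χ (frac 1 1 (by simp)) ^ N := by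
  set s := χ (frac 1 1 (by simp)) with hsdef
  set z : Fin n → ℝ := fun i => χ (frac (X i) 1 (by simp)) / s with hz
  have hpow : ∀ K, χ (frac 1 K (by simp)) = s ^ K := by
    intro K
    induction K with
    | zero =>
      rw [pow_zero, ← map_one χ]
      congr 1
      exact Subtype.ext (funext fun x => by simp [frac_apply])
    | succ K ih =>
      rw [pow_succ, ← ih, hsdef, ← map_mul, frac_mul _ _ (by simp)]
      congr 1
      exact frac_congr _ _ (by simp)
  have key : ∀ P : MvPolynomial (Fin n) ℝ, ∃ K₀, ∀ K ≥ K₀, ∀ h,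
      χ (frac P K h) = eval z P * s ^ K := by
    intro P
    induction P using MvPolynomial.induction_on with
    | C a =>
      refine ⟨0, fun K _ h => ?_⟩
      rw [eval_C, ← hpow, ← smul_eq_mul, ← map_smul]
      congr 1
      exact Subtype.ext (funext fun x => by
        change _ / _ = a * (_ / _)
        simp [div_eq_mul_inv])
    | add P R hP hR =>
      obtain ⟨K₁, h₁⟩ := hP
      obtain ⟨K₂, h₂⟩ := hR
      refine ⟨max (max K₁ K₂) (max P.totalDegree R.totalDegree), fun K hK h => ?_⟩
      simp only [ge_iff_le, max_le_iff] at hK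
      rw [← frac_add (by omega) (by omega), map_add, h₁ K hK.1.1, h₂ K hK.1.2, map_add, add_mul]
    | mul_X P i hP =>
      obtain ⟨K₁, h₁⟩ := hP
      refine ⟨max K₁ P.totalDegree + 1, fun K hK h => ?_⟩
      obtain ⟨K, rfl⟩ : ∃ K', K = K' + 1 := ⟨K - 1, by omega⟩
      have hK1 : K₁ ≤ K := by have := le_max_left K₁ P.totalDegree; omega
      have hK2 : P.totalDegree ≤ K := by have := le_max_right K₁ P.totalDegree; omega
      rw [← frac_mul (K := 1) (by omega) (by simp), map_mul, h₁ K hK1, map_mul, eval_X, hz]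
      field_simp
      ring
  obtain ⟨K₀, hK₀⟩ := key P
  have h1 := hK₀ (N + K₀) (by omega) (by omega)
  have h2 : frac P (N + K₀) (by omega) = frac P N h * frac 1 K₀ (by simp) := by
    rw [frac_mul _ _ (by rw [mul_one]; omega)]
    exact frac_congr _ _ (by simp)
  rw [h2, map_mul, hpow, pow_add, ← mul_assoc] at h1
  exact mul_right_cancel₀ (pow_ne_zero _ hs) h1

theorem character_frac_eq_zero (hs : χ (frac 1 1 (by simp)) = 0)
    (P : MvPolynomial (Fin n) ℝ) (N : ℕ) (h : P.totalDegree < 2 * N) :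
    χ (frac P N h.le) = 0 := by
  have hPP : (P * P).totalDegree ≤ 2 * (2 * N - 1) :=
    (totalDegree_mul_le' (Nat.le_sub_one_of_lt h) (Nat.le_sub_one_of_lt h)).trans (by omega)
  have h1 : frac P N h.le * frac P N h.le =
      frac 1 1 (by simp) * frac (P * P) (2 * N - 1) hPP := by
    rw [frac_mul _ _ (by omega), frac_mul _ _ (by rw [one_mul]; omega)]
    refine frac_congr _ _ ?_
    rw [one_mul, show 1 + (2 * N - 1) = N + N by omega]
  have h2 := congrArg χ h1
  rw [map_mul, map_mul, hs, zero_mul] at h2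
  exact mul_self_eq_zero.1 h2

end Characters

end BoundedFractions


section PolynomialMatrices

theorem isSOSMatrix_transpose_mul_self {σ ι κ : Type*} [Fintype ι] [Fintype κ]
    (T : Matrix κ ι (MvPolynomial σ ℝ)) : IsSOSMatrix (Tᵀ * T) := by
  classical
  refine ⟨Fintype.card κ, T.submatrix (Fintype.equivFin κ).symm id, ?_⟩
  rw [transpose_submatrix, submatrix_mul_equiv, submatrix_id_id]

theorem isSOSMatrix_zero {σ ι : Type*} [Fintype ι] :
    IsSOSMatrix (0 : Matrix ι ι (MvPolynomial σ ℝ)) :=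
  ⟨0, 0, by simp⟩

theorem IsSOSMatrix.add {σ ι : Type*} [Fintype ι] {M M' : Matrix ι ι (MvPolynomial σ ℝ)}
    (h : IsSOSMatrix M) (h' : IsSOSMatrix M') : IsSOSMatrix (M + M') := by
  obtain ⟨l, T, rfl⟩ := h
  obtain ⟨l', T', rfl⟩ := h'
  have := isSOSMatrix_transpose_mul_self (Matrix.fromRows T T')
  rwa [transpose_fromRows, fromCols_mul_fromRows] at this

theorem IsSOSMatrix.isSumSq_smul {σ ι : Type*} [Fintype ι] {M : Matrix ι ι (MvPolynomial σ ℝ)}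
    (h : IsSOSMatrix M) {f : MvPolynomial σ ℝ} (hf : IsSumSq f) : IsSOSMatrix (f • M) := by
  induction hf with
  | zero => rw [zero_smul]; exact isSOSMatrix_zero
  | sq_add a _ ih =>
    rw [add_smul]
    refine IsSOSMatrix.add ?_ ih
    obtain ⟨l, T, rfl⟩ := h
    refine ⟨l, a • T, ?_⟩
    rw [transpose_smul, Matrix.smul_mul, Matrix.mul_smul, smul_smul]

theorem isSumSq_map {R S : Type*} [CommRing R] [CommRing S] (φ : R →+* S) {f : R}
    (hf : IsSumSq f) : IsSumSq (φ f) := by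
  induction hf with
  | zero => rw [map_zero]; exact IsSumSq.zero
  | sq_add a _ ih => rw [map_add, map_mul]; exact IsSumSq.sq_add _ ih

theorem matDeg_le_iff {ι σ : Type*} [Fintype ι] {M : Matrix ι ι (MvPolynomial σ ℝ)} {k : ℕ} :
    matDeg M ≤ k ↔ ∀ i j, (M i j).totalDegree ≤ k := by
  simp [matDeg, Finset.sup_le_iff]

variable {n m : ℕ}

theorem matDegX_le_iff {ι : Type*} [Fintype ι]
    {M : Matrix ι ι (MvPolynomial (Fin n ⊕ Fin m) ℝ)} {k : ℕ} :
    matDegX M ≤ k ↔ ∀ i j, degX (M i j) ≤ k := by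
  simp [matDegX, Finset.sup_le_iff]

theorem degX_le_iff {q : MvPolynomial (Fin n ⊕ Fin m) ℝ} {k : ℕ} :
    degX q ≤ k ↔ ∀ d ∈ q.support, ∑ i : Fin n, d (Sum.inl i) ≤ k := by
  simp only [degX, Finset.sup_le_iff]

theorem degX_add_le {q r : MvPolynomial (Fin n ⊕ Fin m) ℝ} {k : ℕ} (hq : degX q ≤ k)
    (hr : degX r ≤ k) : degX (q + r) ≤ k := by
  classical
  rw [degX_le_iff] at *
  intro d hd
  rcases Finset.mem_union.1 (support_add hd) with h | h
  exacts [hq d h, hr d h]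

theorem degX_zero : degX (0 : MvPolynomial (Fin n ⊕ Fin m) ℝ) = 0 := by simp [degX]

theorem degX_sum_le {ι : Type*} {s : Finset ι} {q : ι → MvPolynomial (Fin n ⊕ Fin m) ℝ} {k : ℕ}
    (hq : ∀ i ∈ s, degX (q i) ≤ k) : degX (∑ i ∈ s, q i) ≤ k := by
  classical
  induction s using Finset.induction_on with
  | empty => simp [degX_zero]
  | insert a s ha ih =>
    rw [Finset.sum_insert ha]
    exact degX_add_le (hq a (mem_insert_self _ _)) (ih fun i hi => hq i (mem_insert_of_mem hi))

theorem degX_mul_le {q r : MvPolynomial (Fin n ⊕ Fin m) ℝ} {k l : ℕ} (hq : degX q ≤ k)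
    (hr : degX r ≤ l) : degX (q * r) ≤ k + l := by
  classical
  rw [degX_le_iff] at *
  intro d hd
  obtain ⟨a, ha, b, hb, rfl⟩ := Finset.mem_add.1 (support_mul _ _ hd)
  simp only [Finsupp.add_apply, Finset.sum_add_distrib]
  exact add_le_add (hq a ha) (hr b hb)

theorem degX_rename_inl_le (P : MvPolynomial (Fin n) ℝ) :
    degX (rename (Sum.inl : Fin n → Fin n ⊕ Fin m) P) ≤ P.totalDegree := by
  classical
  rw [degX_le_iff]
  intro d hd
  rw [support_rename_of_injective Sum.inl_injective] at hd
  obtain ⟨e, he, rfl⟩ := Finset.mem_image.1 hd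
  refine le_trans (le_of_eq ?_) (le_totalDegree he)
  rw [Finsupp.sum_fintype _ _ (fun _ => rfl)]
  exact Finset.sum_congr rfl fun i _ => Finsupp.mapDomain_apply Sum.inl_injective _ _

theorem degX_rename_inr (h : MvPolynomial (Fin m) ℝ) :
    degX (rename (Sum.inr : Fin m → Fin n ⊕ Fin m) h) = 0 := by
  classical
  rw [← Nat.le_zero, degX_le_iff]
  intro d hd
  rw [support_rename_of_injective Sum.inr_injective] at hd
  obtain ⟨e, he, rfl⟩ := Finset.mem_image.1 hd
  refine (Finset.sum_eq_zero fun i _ => Finsupp.mapDomain_of_notMem_range _ _ (by simp)).le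

theorem degX_C (c : ℝ) : degX (C c : MvPolynomial (Fin n ⊕ Fin m) ℝ) = 0 := by
  rw [← rename_C Sum.inr, degX_rename_inr]

theorem totalDegree_integY_le (ν : Measure (Fin m → ℝ))
    (q : MvPolynomial (Fin n ⊕ Fin m) ℝ) : (integY ν q).totalDegree ≤ degX q := by
  refine totalDegree_finsetSum_le fun d hd => (totalDegree_monomial_le _ _).trans ?_
  refine le_trans (le_of_eq ?_) (degX_le_iff.1 le_rfl d hd)
  rw [Finsupp.sum_fintype _ _ (fun _ => rfl)]
  rfl

theorem eval_integY {ν : Measure (Fin m → ℝ)} (hmom : momentsFinite ν)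
    (q : MvPolynomial (Fin n ⊕ Fin m) ℝ) (x : Fin n → ℝ) :
    eval x (integY ν q) = ∫ y, eval (Sum.elim x y) q ∂ν := by
  have hprod : ∀ (d : (Fin n ⊕ Fin m) →₀ ℕ) (y : Fin m → ℝ),
      (d.prod fun i e => Sum.elim x y i ^ e) =
        ((xPart d).prod fun i e => x i ^ e) * ∏ j, y j ^ d (Sum.inr j) := by
    intro d y
    rw [Finsupp.prod_fintype _ _ (fun _ => pow_zero _), Fintype.prod_sum_type,
      Finsupp.prod_fintype _ _ (fun _ => pow_zero _)]
    rfl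
  have hint : ∀ d : (Fin n ⊕ Fin m) →₀ ℕ,
      Integrable (fun y : Fin m → ℝ => ∏ j, y j ^ d (Sum.inr j)) ν := by
    intro d
    refine (hmom.integrable (∏ j, X j ^ d (Sum.inr j))).congr
      (Filter.Eventually.of_forall fun y => ?_)
    simp only [map_prod, map_pow, eval_X]
  simp only [eval_eq' (Sum.elim _ _) q, integY, map_sum, eval_monomial]
  rw [integral_finsetSum]
  · refine Finset.sum_congr rfl fun d _ => ?_
    rw [← integral_const_mul, ← integral_mul_const]
    refine integral_congr_ae (Filter.Eventually.of_forall fun y => ?_)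
    have := hprod d y
    rw [Finsupp.prod_fintype _ _ (fun _ => pow_zero _)] at this
    simp only [this]
    ring
  · intro d _
    have := ((hint d).const_mul (q.coeff d * (xPart d).prod fun i e => x i ^ e))
    refine this.congr (Filter.Eventually.of_forall fun y => ?_)
    have := hprod d y
    rw [Finsupp.prod_fintype _ _ (fun _ => pow_zero _)] at this
    simp only [this]
    ring

theorem integrable_eval_elim {ν : Measure (Fin m → ℝ)} (hmom : momentsFinite ν)
    (q : MvPolynomial (Fin n ⊕ Fin m) ℝ) (x : Fin n → ℝ) :
    Integrable (fun y => eval (Sum.elim x y) q) ν := by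
  refine (hmom.integrable (aeval (Sum.elim (fun i => C (x i)) X) q)).congr
    (Filter.Eventually.of_forall fun y => ?_)
  have h : (aeval y : MvPolynomial (Fin m) ℝ →ₐ[ℝ] ℝ).comp
      (aeval (Sum.elim (fun i => C (x i)) X)) = aeval (Sum.elim x y) := by
    refine algHom_ext fun i => ?_
    cases i <;> simp
  exact DFunLike.congr_fun h q

theorem eval_integY_add {ν : Measure (Fin m → ℝ)} (hmom : momentsFinite ν)
    (q r : MvPolynomial (Fin n ⊕ Fin m) ℝ) (x : Fin n → ℝ) :
    eval x (integY ν (q + r)) = eval x (integY ν q) + eval x (integY ν r) := by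
  simp only [eval_integY hmom, map_add]
  exact integral_add (integrable_eval_elim hmom q x) (integrable_eval_elim hmom r x)

theorem eval_integY_rename_mul {ν : Measure (Fin m → ℝ)} (hmom : momentsFinite ν)
    (f : MvPolynomial (Fin n) ℝ) (q : MvPolynomial (Fin n ⊕ Fin m) ℝ) (x : Fin n → ℝ) :
    eval x (integY ν (rename Sum.inl f * q)) = eval x f * eval x (integY ν q) := by
  simp only [eval_integY hmom, map_mul, eval_rename, Sum.elim_comp_inl]
  exact integral_const_mul _ _

theorem lram_add {R : Type*} [CommSemiring R] {ιp ιq : Type*} [Fintype ιq]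
    (A A' : Matrix (ιp × ιq) (ιp × ιq) R) (B : Matrix ιq ιq R) :
    lram (A + A') B = lram A B + lram A' B := by
  ext i j
  simp [lram, add_mul, Finset.sum_add_distrib]

theorem lram_smul {R : Type*} [CommSemiring R] {ιp ιq : Type*} [Fintype ιq] (r : R)
    (A : Matrix (ιp × ιq) (ιp × ιq) R) (B : Matrix ιq ιq R) :
    lram (r • A) B = r • lram A B := by
  ext i j
  simp [lram, Finset.mul_sum, mul_assoc]

end PolynomialMatrices


section FractionCone

variable {n m p q : ℕ}

/-- `M` becomes, after symmetrisation and multiplication by `θ ^ N`, a weighted sum of squares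
with the degree bounds of the Positivstellensatz. -/
def HasSOSRep (ν : Measure (Fin m → ℝ))
    (G : Matrix (Fin q) (Fin q) (MvPolynomial (Fin n ⊕ Fin m) ℝ)) (D N : ℕ)
    (M : Matrix (Fin p) (Fin p) (boundedFractions n)) : Prop :=
  ∃ (S0 : Matrix (Fin p) (Fin p) (MvPolynomial (Fin n) ℝ))
    (Sg : Matrix (Fin p × Fin q) (Fin p × Fin q) (MvPolynomial (Fin n ⊕ Fin m) ℝ)),
    IsSOSMatrix S0 ∧ IsSOSMatrix Sg ∧ matDeg S0 ≤ 2 * N ∧ matDegX Sg ≤ 2 * (N - D) ∧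
    ∀ x i j, ((M i j : (Fin n → ℝ) → ℝ) x + (M j i : (Fin n → ℝ) → ℝ) x) *
      eval x (thetaPoly n) ^ N = eval x (S0 i j) + eval x (integY ν (lram Sg G i j))

variable {ν : Measure (Fin m → ℝ)} {G : Matrix (Fin q) (Fin q) (MvPolynomial (Fin n ⊕ Fin m) ℝ)}
  {D N : ℕ} {M M' : Matrix (Fin p) (Fin p) (boundedFractions n)}

theorem HasSOSRep.add (hmom : momentsFinite ν) (h : HasSOSRep ν G D N M)
    (h' : HasSOSRep ν G D N M') : HasSOSRep ν G D N (M + M') := by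
  obtain ⟨S, T, hS, hT, hSd, hTd, he⟩ := h
  obtain ⟨S', T', hS', hT', hSd', hTd', he'⟩ := h'
  refine ⟨S + S', T + T', hS.add hS', hT.add hT', ?_, ?_, fun x i j => ?_⟩
  · exact matDeg_le_iff.2 fun i j => (totalDegree_add _ _).trans
      (max_le (matDeg_le_iff.1 hSd i j) (matDeg_le_iff.1 hSd' i j))
  · exact matDegX_le_iff.2 fun i j =>
      degX_add_le (matDegX_le_iff.1 hTd i j) (matDegX_le_iff.1 hTd' i j)
  · simp only [lram_add, Matrix.add_apply, eval_integY_add hmom, map_add, Subalgebra.coe_add,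
      Pi.add_apply]
    linear_combination he x i j + he' x i j

theorem HasSOSRep.isSumSq_mul (hmom : momentsFinite ν) (hDN : D ≤ N)
    (h : HasSOSRep ν G D N M) {f : MvPolynomial (Fin n) ℝ} (hf : IsSumSq f) {k : ℕ}
    (hfk : f.totalDegree ≤ 2 * k)
    (hM : ∀ x i j, (M' i j : (Fin n → ℝ) → ℝ) x * eval x (thetaPoly n) ^ k =
      eval x f * (M i j : (Fin n → ℝ) → ℝ) x) : HasSOSRep ν G D (N + k) M' := by
  obtain ⟨S, T, hS, hT, hSd, hTd, he⟩ := h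
  refine ⟨f • S, rename Sum.inl f • T, hS.isSumSq_smul hf,
    hT.isSumSq_smul (isSumSq_map (rename Sum.inl).toRingHom hf), ?_, ?_, fun x i j => ?_⟩
  · exact matDeg_le_iff.2 fun i j =>
      (totalDegree_mul_le' hfk (matDeg_le_iff.1 hSd i j)).trans (by omega)
  · exact matDegX_le_iff.2 fun i j => (degX_mul_le ((degX_rename_inl_le f).trans hfk)
      (matDegX_le_iff.1 hTd i j)).trans (by omega)
  · rw [lram_smul, Matrix.smul_apply, Matrix.smul_apply, smul_eq_mul, smul_eq_mul,
      eval_integY_rename_mul hmom, map_mul, pow_add]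
    linear_combination eval x f * he x i j +
      eval x (thetaPoly n) ^ N * (hM x i j + hM x j i)

theorem isSumSq_thetaPoly_pow (k : ℕ) : IsSumSq (thetaPoly n ^ k) := by
  have h : IsSumSq (thetaPoly n) := by
    refine IsSumSq.add (by simp)  ?_
    simp only [sq]
    exact IsSumSq.sum_mul_self _ _
  induction k with
  | zero => simp
  | succ k ih => rw [pow_succ]; exact ih.mul h

theorem HasSOSRep.mono (hmom : momentsFinite ν) (hDN : D ≤ N) (h : HasSOSRep ν G D N M)
    {K : ℕ} (hK : N ≤ K) : HasSOSRep ν G D K M := by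
  obtain ⟨k, rfl⟩ := exists_add_of_le hK
  exact h.isSumSq_mul hmom hDN (isSumSq_thetaPoly_pow k) (totalDegree_thetaPoly_pow_le k)
    fun x i j => by rw [map_pow, mul_comm]

theorem HasSOSRep.congr (h : HasSOSRep ν G D N M) (hM : M + Mᵀ = M' + M'ᵀ) :
    HasSOSRep ν G D N M' := by
  obtain ⟨S, T, hS, hT, hSd, hTd, he⟩ := h
  refine ⟨S, T, hS, hT, hSd, hTd, fun x i j => ?_⟩
  rw [← he]
  have := congrArg (fun a : boundedFractions n => (a : (Fin n → ℝ) → ℝ) x)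
    (congrFun (congrFun hM i) j)
  change (_ + _ : ℝ) = _ + _ at this
  rw [show (M i j : (Fin n → ℝ) → ℝ) x + (M j i : (Fin n → ℝ) → ℝ) x = _ from this]
  rfl

/-- The cone of the matrices of bounded fractions that admit a representation. -/
def sosCone (p : ℕ) (ν : Measure (Fin m → ℝ))
    (G : Matrix (Fin q) (Fin q) (MvPolynomial (Fin n ⊕ Fin m) ℝ)) (D : ℕ) :
    Set (Matrix (Fin p) (Fin p) (boundedFractions n)) :=
  {M | ∃ N, D ≤ N ∧ HasSOSRep ν G D N M}

theorem add_mem_sosCone (hmom : momentsFinite ν) (h : M ∈ sosCone p ν G D)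
    (h' : M' ∈ sosCone p ν G D) : M + M' ∈ sosCone p ν G D := by
  obtain ⟨N, hN, h⟩ := h
  obtain ⟨K, hK, h'⟩ := h'
  exact ⟨max N K, le_max_of_le_left hN, (h.mono hmom hN (le_max_left _ _)).add hmom
    (h'.mono hmom hK (le_max_right _ _))⟩

theorem isSumSq_C {σ : Type*} {c : ℝ} (hc : 0 ≤ c) : IsSumSq (C c : MvPolynomial σ ℝ) :=
  isSumSq_algebraMap hc

theorem smul_mem_sosCone (hmom : momentsFinite ν) {c : ℝ} (hc : 0 ≤ c)
    (h : M ∈ sosCone p ν G D) : c • M ∈ sosCone p ν G D := by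
  obtain ⟨N, hN, h⟩ := h
  refine ⟨N + 0, hN, h.isSumSq_mul hmom hN (isSumSq_C hc) (by simp) fun x i j => ?_⟩
  change c * _ * _ = _
  rw [eval_C, pow_zero, mul_one]

theorem mul_self_smul_mem_sosCone (hmom : momentsFinite ν) (a : boundedFractions n)
    (h : M ∈ sosCone p ν G D) : (a * a) • M ∈ sosCone p ν G D := by
  obtain ⟨N, hN, h⟩ := h
  obtain ⟨P, k, hP, rfl⟩ := exists_eq_frac a
  refine ⟨N + (k + k), by omega, h.isSumSq_mul hmom hN (IsSumSq.mul_self P)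
    ((totalDegree_mul_le' hP hP).trans (by omega)) fun x i j => ?_⟩
  have hx := (eval_thetaPoly_pos x).ne'
  change (_ / _ * (_ / _) * _ * _ : ℝ) = _
  rw [map_mul, pow_add]
  field_simp

theorem isSumSq_smul_mem_sosCone (hmom : momentsFinite ν) (h0 : 0 ∈ sosCone p ν G D)
    {a : boundedFractions n} (ha : IsSumSq a)
    (h : M ∈ sosCone p ν G D) : a • M ∈ sosCone p ν G D := by
  induction ha with
  | zero => rw [zero_smul]; exact h0
  | sq_add a _ ih =>
    rw [add_smul]
    exact add_mem_sosCone hmom (mul_self_smul_mem_sosCone hmom a h) ih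

theorem lram_zero {R : Type*} [CommSemiring R] {ιp ιq : Type*} [Fintype ιq]
    (B : Matrix ιq ιq R) : lram (0 : Matrix (ιp × ιq) (ιp × ιq) R) B = 0 := by
  ext i j
  simp [lram]

theorem map_algebraMap_mem_sosCone {B : Matrix (Fin p) (Fin p) ℝ} (hB : B.PosSemidef) :
    B.map (algebraMap ℝ (boundedFractions n)) ∈ sosCone p ν G D := by
  classical
  refine ⟨D, le_rfl, (C 2 * thetaPoly n ^ D) • B.map C, 0, ?_, isSOSMatrix_zero, ?_, ?_,
    fun x i j => ?_⟩
  · refine IsSOSMatrix.isSumSq_smul ?_ ((isSumSq_C (by norm_num)).mul (isSumSq_thetaPoly_pow D))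
    obtain ⟨l, v, rfl⟩ := Matrix.posSemidef_iff_eq_sum_vecMulVec.1 hB
    refine ⟨l, (Matrix.of v).map C, ?_⟩
    ext1 i j
    simp [Matrix.mul_apply, Matrix.sum_apply, vecMulVec_apply]
  · rw [matDeg_le_iff]
    intro i j
    refine (totalDegree_mul_le' (a := 2 * D) (b := 0) ?_ (by simp)).trans (by omega)
    exact (totalDegree_mul_le' (a := 0) (by simp) (totalDegree_thetaPoly_pow_le D)).trans
      (by omega)
  · rw [matDegX_le_iff]
    intro i j
    simp [degX_zero]
  · have hsymm : B j i = B i j := by simpa using hB.isHermitian.apply i j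
    have hcoe : ∀ r : ℝ, ((algebraMap ℝ (boundedFractions n) r :) : (Fin n → ℝ) → ℝ) x = r :=
      fun r => rfl
    have hzero : integY ν (0 : MvPolynomial (Fin n ⊕ Fin m) ℝ) = 0 := by simp [integY]
    rw [lram_zero, Matrix.zero_apply, hzero, Matrix.map_apply, Matrix.map_apply, hcoe, hcoe, hsymm,
      Matrix.smul_apply, Matrix.map_apply, smul_eq_mul]
    simp only [map_mul, map_pow, eval_C, map_zero]
    ring

theorem zero_mem_sosCone : 0 ∈ sosCone p ν G D := by
  have := map_algebraMap_mem_sosCone (n := n) (ν := ν) (G := G) (D := D)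
    (PosSemidef.zero (n := Fin p) (R := ℝ))
  simpa using this

/-- The scalar polynomial `∫ h(y)² uᵀ G(x, y) u dν(y)`. -/
noncomputable def integratedForm (ν : Measure (Fin m → ℝ))
    (G : Matrix (Fin q) (Fin q) (MvPolynomial (Fin n ⊕ Fin m) ℝ)) (u : Fin q → ℝ)
    (h : MvPolynomial (Fin m) ℝ) : MvPolynomial (Fin n) ℝ :=
  integY ν (∑ a, ∑ c, C (u c) * rename Sum.inr h * (C (u a) * rename Sum.inr h) * G c a)

theorem totalDegree_half_integratedForm_le (hD : ∀ a c, degX (G a c) ≤ 2 * D) (u : Fin q → ℝ)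
    (h : MvPolynomial (Fin m) ℝ) : (C (1 / 2) * integratedForm ν G u h).totalDegree ≤ 2 * D := by
  have h1 : ∀ c, degX (C (u c) * rename Sum.inr h : MvPolynomial (Fin n ⊕ Fin m) ℝ) ≤ 0 + 0 :=
    fun c => degX_mul_le (degX_C _).le (degX_rename_inr h).le
  have h2 : (integratedForm ν G u h).totalDegree ≤ 2 * D :=
    (totalDegree_integY_le _ _).trans (degX_sum_le fun a _ => degX_sum_le fun c _ =>
      (degX_mul_le (degX_mul_le (h1 c) (h1 a)) (hD c a)).trans (by omega))
  exact (totalDegree_mul_le' (a := 0) (by simp) h2).trans (by omega)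

theorem single_integratedForm_mem_sosCone (hD : ∀ a c, degX (G a c) ≤ 2 * D) (u : Fin q → ℝ)
    (h : MvPolynomial (Fin m) ℝ) (k : Fin p) :
    Matrix.single k k (frac (C (1 / 2) * integratedForm ν G u h) D
      (totalDegree_half_integratedForm_le hD u h)) ∈ sosCone p ν G D := by
  set T : Matrix Unit (Fin p × Fin q) (MvPolynomial (Fin n ⊕ Fin m) ℝ) :=
    Matrix.of fun _ r => if r.1 = k then C (u r.2) * rename Sum.inr h else 0 with hT
  have h1 : ∀ c, degX (C (u c) * rename Sum.inr h : MvPolynomial (Fin n ⊕ Fin m) ℝ) ≤ 0 + 0 :=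
    fun c => degX_mul_le (degX_C _).le (degX_rename_inr h).le
  have hTd : ∀ r, degX (T () r) ≤ 0 := by
    intro r
    simp only [hT, of_apply]
    split_ifs
    exacts [h1 _, degX_zero.le]
  have hTT : ∀ r r', (Tᵀ * T) r r' = T () r * T () r' := fun r r' => by
    simp [Matrix.mul_apply]
  refine ⟨D, le_rfl, 0, Tᵀ * T, isSOSMatrix_zero, isSOSMatrix_transpose_mul_self T, ?_, ?_,
    fun x i j => ?_⟩
  · rw [matDeg_le_iff]
    simp
  · rw [matDegX_le_iff]
    intro r r'
    rw [hTT]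
    exact (degX_mul_le (hTd r) (hTd r')).trans (by omega)
  · have hx := (eval_thetaPoly_pos x).ne'
    simp only [lram, of_apply, hTT, Matrix.zero_apply, map_zero, zero_add]
    by_cases hi : i = k
    · by_cases hj : j = k
      · subst hi hj
        simp only [hT, of_apply, if_true, Matrix.single_apply_same, frac_apply, map_mul, eval_C,
          integratedForm]
        field_simp
        ring
      · simp [hT, hi, hj, Ne.symm hj, integY]
    · simp [hT, hi, Ne.symm hi, integY]

/-- Entrywise form of the identity that dominates an elementary matrix by the identity matrix. -/
theorem polarization_entry {R ι : Type*} [CommRing R] [DecidableEq ι] (κ b : R) (i j r t : ι) :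
    let α : ι → R := Pi.single i 1
    let β : ι → R := Pi.single j 1
    let E : ι → ι → R := fun r t => (κ + b) * ((α r - β r) * (α t - β t)) +
      (κ - b) * ((α r + β r) * (α t + β t)) +
      if r = t then 2 * κ * (1 - α r) + 2 * κ * (1 - β r) else 0
    E r t + E t r = (4 * κ * (if r = t then 1 else 0) - 4 * b * (α r * β t)) +
      (4 * κ * (if t = r then 1 else 0) - 4 * b * (α t * β r)) := by
  intro α β E
  by_cases h : r = t
  · subst h
    have h1 : ∀ i : ι, (Pi.single i 1 : ι → R) r * (Pi.single i 1 : ι → R) r =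
        (Pi.single i 1 : ι → R) r := fun i => by
      by_cases hi : r = i <;> simp [hi]
    simp only [E, if_true]
    linear_combination 4 * κ * h1 i + 4 * κ * h1 j
  · have h1 : ∀ i : ι, (Pi.single i 1 : ι → R) r * (Pi.single i 1 : ι → R) t = 0 := fun i => by
      by_cases hi : r = i
      · have : t ≠ i := fun h' => h (hi.trans h'.symm)
        simp [this]
      · simp [hi]
    simp only [E, if_neg h, if_neg (Ne.symm h)]
    linear_combination 4 * κ * h1 i + 4 * κ * h1 j

theorem algebraMap_single {A ι : Type*} [CommRing A] [Algebra ℝ A] [DecidableEq ι] (i r : ι) :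
    algebraMap ℝ A ((Pi.single i 1 : ι → ℝ) r) = (Pi.single i 1 : ι → A) r := by
  by_cases h : r = i <;> simp [h]

theorem exists_smul_one_sub_mem_sosCone (hmom : momentsFinite ν)
    (M : Matrix (Fin p) (Fin p) (boundedFractions n)) :
    ∃ c : ℝ, c • (1 : Matrix (Fin p) (Fin p) (boundedFractions n)) - M ∈ sosCone p ν G D := by
  classical
  have hsingle : ∀ (i j : Fin p) (a : boundedFractions n), ∃ c : ℝ,
      c • (1 : Matrix (Fin p) (Fin p) (boundedFractions n)) - Matrix.single i j a ∈
        sosCone p ν G D := by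
    intro i j a
    obtain ⟨b, rfl⟩ : ∃ b : boundedFractions n, a = 4 * b := by
      refine ⟨algebraMap ℝ _ (1 / 4) * a, ?_⟩
      rw [← mul_assoc, ← map_ofNat (algebraMap ℝ (boundedFractions n)) 4, ← map_mul]
      norm_num
    obtain ⟨k₁, hk₁, h₁⟩ := exists_isSumSq_add b
    obtain ⟨k₂, hk₂, h₂⟩ := exists_isSumSq_add (-b)
    set κ : boundedFractions n := algebraMap ℝ _ (k₁ + k₂) with hκ
    have h₁' : IsSumSq (κ + b) := by
      have := (isSumSq_algebraMap hk₂).add h₁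
      rwa [← add_assoc, ← map_add, add_comm k₂] at this
    have h₂' : IsSumSq (κ - b) := by
      have := (isSumSq_algebraMap hk₁).add h₂
      rwa [← add_assoc, ← map_add, ← sub_eq_add_neg] at this
    have hplus := map_algebraMap_mem_sosCone (n := n) (ν := ν) (G := G) (D := D)
      (posSemidef_vecMulVec_self_star (Pi.single i (1 : ℝ) + Pi.single j 1))
    have hminus := map_algebraMap_mem_sosCone (n := n) (ν := ν) (G := G) (D := D)
      (posSemidef_vecMulVec_self_star (Pi.single i (1 : ℝ) - Pi.single j 1))
    have hdiag := map_algebraMap_mem_sosCone (n := n) (ν := ν) (G := G) (D := D)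
      (PosSemidef.diagonal (d := fun l => 2 * (k₁ + k₂) * (1 - (Pi.single i (1 : ℝ) : _ → ℝ) l) +
        2 * (k₁ + k₂) * (1 - (Pi.single j (1 : ℝ) : _ → ℝ) l)) (fun l => by
          have : ∀ i : Fin p, 0 ≤ 1 - (Pi.single i (1 : ℝ) : _ → ℝ) l := fun i => by
            by_cases h : l = i <;> simp [h]
          have h1 := this i
          have h2 := this j
          positivity))
    have hX := add_mem_sosCone hmom (add_mem_sosCone hmom
      (isSumSq_smul_mem_sosCone hmom zero_mem_sosCone h₁' hminus)
      (isSumSq_smul_mem_sosCone hmom zero_mem_sosCone h₂' hplus)) hdiag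
    obtain ⟨N, hN, hX⟩ := hX
    refine ⟨4 * (k₁ + k₂), N, hN, hX.congr ?_⟩
    ext1 r t
    have hE : ∀ r t, Matrix.single i j (4 * b) r t =
        4 * b * ((Pi.single i 1 : _ → boundedFractions n) r * (Pi.single j 1 : _ → _) t) := by
      intro r t
      by_cases hr : r = i <;> by_cases ht : t = j <;>
        simp [hr, ht, eq_comm (a := i), eq_comm (a := j)]
    have h1 : ∀ r t, ((4 * (k₁ + k₂)) • (1 : Matrix (Fin p) (Fin p) (boundedFractions n))) r t =
        4 * κ * (if r = t then 1 else 0) := by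
      intro r t
      rw [Matrix.smul_apply, Matrix.one_apply, Algebra.smul_def, map_mul, map_ofNat]
    have hd : ∀ r t, algebraMap ℝ (boundedFractions n) (Matrix.diagonal (fun l =>
        2 * (k₁ + k₂) * (1 - (Pi.single i (1 : ℝ) : _ → ℝ) l) +
        2 * (k₁ + k₂) * (1 - (Pi.single j (1 : ℝ) : _ → ℝ) l)) r t) =
        if r = t then 2 * κ * (1 - (Pi.single i 1 : _ → boundedFractions n) r) +
          2 * κ * (1 - (Pi.single j 1 : _ → boundedFractions n) r) else 0 := by
      intro r t
      rw [Matrix.diagonal_apply, apply_ite (algebraMap ℝ (boundedFractions n)), map_zero]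
      simp only [map_add, map_mul, map_sub, map_one, map_ofNat, algebraMap_single, hκ]
    have := polarization_entry κ b i j r t
    simp only [Matrix.add_apply, Matrix.sub_apply, Matrix.transpose_apply, h1, hE,
      Matrix.map_apply, hd]
    simp only [Matrix.smul_apply, Matrix.map_apply, vecMulVec_apply, star_trivial, Pi.add_apply,
      Pi.sub_apply, smul_eq_mul, map_mul, map_add, map_sub, algebraMap_single]
    exact this
  choose c hc using hsingle
  refine ⟨∑ i, ∑ j, c i j (M i j), ?_⟩
  have hsum : (∑ i, ∑ j, c i j (M i j)) • (1 : Matrix (Fin p) (Fin p) (boundedFractions n)) - M =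
      ∑ i, ∑ j, (c i j (M i j) • (1 : Matrix (Fin p) (Fin p) (boundedFractions n)) -
        Matrix.single i j (M i j)) := by
    simp only [Finset.sum_sub_distrib, Finset.sum_smul]
    rw [← matrix_eq_sum_single]
  rw [hsum]
  have hfin : ∀ (s : Finset (Fin p)) (f : Fin p → Matrix (Fin p) (Fin p) (boundedFractions n)),
      (∀ i, f i ∈ sosCone p ν G D) → ∑ i ∈ s, f i ∈ sosCone p ν G D := fun s f hf =>
    Finset.sum_induction _ (· ∈ sosCone p ν G D) (fun _ _ => add_mem_sosCone hmom)
      zero_mem_sosCone fun i _ => hf i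
  exact hfin _ _ fun i => hfin _ _ fun j => hc i j _

end FractionCone


section Conclusion

variable {n m p q : ℕ} {ν : Measure (Fin m → ℝ)}
  {G : Matrix (Fin q) (Fin q) (MvPolynomial (Fin n ⊕ Fin m) ℝ)} {D : ℕ}

theorem eval_integratedForm (hmom : momentsFinite ν) (u : Fin q → ℝ)
    (h : MvPolynomial (Fin m) ℝ) (x : Fin n → ℝ) :
    eval x (integratedForm ν G u h) =
      ∫ y, eval y h ^ 2 * eval y (aeval (Sum.elim (fun i => C (x i)) X)
        (∑ a, ∑ c, C (u c * u a) * G c a)) ∂ν := by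
  rw [integratedForm, eval_integY hmom]
  refine integral_congr_ae (Filter.Eventually.of_forall fun y => ?_)
  have hy : ∀ r : MvPolynomial (Fin n ⊕ Fin m) ℝ,
      eval y (aeval (Sum.elim (fun i => C (x i)) X) r) = eval (Sum.elim x y) r := by
    have h : (aeval y : MvPolynomial (Fin m) ℝ →ₐ[ℝ] ℝ).comp
        (aeval (Sum.elim (fun i => C (x i)) X)) = aeval (Sum.elim x y) := by
      refine algHom_ext fun i => ?_
      cases i <;> simp
    exact fun r => DFunLike.congr_fun h r
  simp only [hy, map_sum, map_mul, eval_C, eval_rename, Sum.elim_comp_inr, Finset.mul_sum]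
  exact Finset.sum_congr rfl fun a _ => Finset.sum_congr rfl fun c _ => by ring

theorem posSemidef_of_integratedForm_nonneg {Y : Set (Fin m → ℝ)} (hsupp : hasSupport ν Y)
    (hmom : momentsFinite ν) (hcar : Carleman ν) (hGs : G.IsSymm) (x : Fin n → ℝ)
    (h : ∀ u k, 0 ≤ eval x (integratedForm ν G u k)) :
    ∀ y ∈ Y, (evalMat (Sum.elim x y) G).PosSemidef := by
  intro y hy
  refine PosSemidef.of_dotProduct_mulVec_nonneg ?_ fun u => ?_
  · ext i j
    simp [evalMat, hGs.apply i j]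
  · have h1 := nonneg_of_integral_sq_mul_nonneg hsupp hmom hcar
      (aeval (Sum.elim (fun i => C (x i)) X) (∑ a, ∑ c, C (u c * u a) * G c a))
      (fun k => by rw [← eval_integratedForm hmom]; exact h u k) y hy
    have hcomp : (aeval y : MvPolynomial (Fin m) ℝ →ₐ[ℝ] ℝ).comp
        (aeval (Sum.elim (fun i => C (x i)) X)) = aeval (Sum.elim x y) := by
      refine algHom_ext fun i => ?_
      cases i <;> simp
    have h2 : ∀ r : MvPolynomial (Fin n ⊕ Fin m) ℝ,
        eval y (aeval (Sum.elim (fun i => C (x i)) X) r) = eval (Sum.elim x y) r :=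
      fun r => DFunLike.congr_fun hcomp r
    rw [h2] at h1
    simp only [map_sum, map_mul, eval_C] at h1
    rw [Finset.sum_comm] at h1
    simp only [dotProduct, mulVec, star_trivial, evalMat, Matrix.map_apply, Finset.mul_sum]
    refine h1.trans_eq (Finset.sum_congr rfl fun a _ => Finset.sum_congr rfl fun c _ => by ring)

theorem linearMap_eq_sum_character {L : Matrix (Fin p) (Fin p) (boundedFractions n) →ₗ[ℝ] ℝ}
    {χ : boundedFractions n →ₐ[ℝ] ℝ} (hL : ∀ a w, L (a • w) = χ a * L w)
    (M : Matrix (Fin p) (Fin p) (boundedFractions n)) :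
    L M = ∑ i, ∑ j, χ (M i j) * L (Matrix.single i j 1) := by
  conv_lhs => rw [matrix_eq_sum_single M]
  simp only [map_sum]
  refine Finset.sum_congr rfl fun i _ => Finset.sum_congr rfl fun j _ => ?_
  rw [← hL, Matrix.smul_single, smul_eq_mul, mul_one]

theorem frac_add_smul_one_mem_sosCone {Y : Set (Fin m → ℝ)} (hsupp : hasSupport ν Y)
    (hmom : momentsFinite ν) (hcar : Carleman ν) (hGs : G.IsSymm)
    (hD : ∀ a c, degX (G a c) ≤ 2 * D)
    {F : Matrix (Fin p) (Fin p) (MvPolynomial (Fin n) ℝ)} {d : ℕ}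
    (hF : ∀ i j, (F i j).totalDegree < 2 * d)
    (hpsd : ∀ x : Fin n → ℝ,
      (∀ y ∈ Y, (evalMat (Sum.elim x y) G).PosSemidef) → (evalMat x F).PosSemidef)
    {ε : ℝ} (hε : 0 < ε) :
    (Matrix.of fun i j => frac (F i j) d (hF i j).le) +
      ε • (1 : Matrix (Fin p) (Fin p) (boundedFractions n)) ∈ sosCone p ν G D := by
  classical
  set H : Matrix (Fin p) (Fin p) (boundedFractions n) :=
    Matrix.of fun i j => frac (F i j) d (hF i j).le with hH
  have hone : (1 : Matrix (Fin p) (Fin p) (boundedFractions n)) ∈ sosCone p ν G D := by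
    have := map_algebraMap_mem_sosCone (n := n) (ν := ν) (G := G) (D := D)
      (PosSemidef.one (n := Fin p) (R := ℝ))
    rwa [Matrix.map_one _ (map_zero _) (map_one _)] at this
  by_contra hmem
  obtain ⟨L, χ, hpos, hL1, hLv, hmul⟩ := exists_pure_state (A := boundedFractions n)
    zero_mem_sosCone (fun u hu w hw => add_mem_sosCone hmom hu hw)
    (fun c hc w hw => smul_mem_sosCone hmom hc hw) hone
    (exists_smul_one_sub_mem_sosCone hmom) (fun a => by
      obtain ⟨c, -, hc⟩ := exists_isSumSq_add a
      refine ⟨c, fun w hw => ?_⟩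
      have := isSumSq_smul_mem_sosCone hmom zero_mem_sosCone hc hw
      rwa [add_smul, algebraMap_smul] at this) hmem
  rw [map_add, map_smul, hL1, smul_eq_mul, mul_one] at hLv
  suffices hLH : 0 ≤ L H by linarith
  by_cases hs : χ (frac 1 1 (by simp)) = 0
  · rw [linearMap_eq_sum_character hmul]
    refine (Finset.sum_eq_zero fun i _ => Finset.sum_eq_zero fun j _ => ?_).ge
    rw [hH, of_apply, character_frac_eq_zero χ hs _ _ (hF i j), zero_mul]
  set s := χ (frac 1 1 (by simp)) with hsdef
  have hs0 : 0 < s := lt_of_le_of_ne (character_inv_theta_nonneg χ) (Ne.symm hs)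
  set z : Fin n → ℝ := fun i => χ (frac (X i) 1 (by simp)) / s with hz
  have hχ : ∀ (P : MvPolynomial (Fin n) ℝ) (N : ℕ) (h : P.totalDegree ≤ 2 * N),
      χ (frac P N h) = eval z P * s ^ N := character_frac_eq_eval χ hs
  obtain ⟨k, hk⟩ : ∃ k, 0 < L (Matrix.single k k 1) := by
    by_contra! hle
    have : L 1 ≤ 0 := by
      rw [linearMap_eq_sum_character hmul]
      refine Finset.sum_nonpos fun i _ => ?_
      rw [Finset.sum_eq_single i (fun j _ hj => by rw [Matrix.one_apply_ne hj.symm, map_zero,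
        zero_mul]) (by simp), Matrix.one_apply_eq, map_one, one_mul]
      exact hle i
    linarith
  have hform : ∀ u h, 0 ≤ eval z (integratedForm ν G u h) := by
    intro u h
    have h1 := hpos _ (single_integratedForm_mem_sosCone (ν := ν) hD u h k)
    have h2 : Matrix.single k k (frac (C (1 / 2) * integratedForm ν G u h) D
        (totalDegree_half_integratedForm_le hD u h)) =
        (frac (C (1 / 2) * integratedForm ν G u h) D
        (totalDegree_half_integratedForm_le hD u h)) • Matrix.single k k 1 := by
      rw [Matrix.smul_single, smul_eq_mul, mul_one]
    rw [h2, hmul, hχ, map_mul, eval_C] at h1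
    have h3 : 0 < s ^ D := by positivity
    by_contra! hneg
    have h4 : 1 / 2 * eval z (integratedForm ν G u h) * s ^ D * L (Matrix.single k k 1) < 0 :=
      mul_neg_of_neg_of_pos (mul_neg_of_neg_of_pos (by linarith) h3) hk
    linarith
  have hFz := hpsd z (posSemidef_of_integratedForm_nonneg hsupp hmom hcar hGs z hform)
  have hconst := hpos _ (map_algebraMap_mem_sosCone (n := n) (ν := ν) (G := G) (D := D) hFz)
  have hLH : L H = s ^ d * L ((evalMat z F).map (algebraMap ℝ (boundedFractions n))) := by
    rw [linearMap_eq_sum_character hmul, linearMap_eq_sum_character hmul, Finset.mul_sum]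
    refine Finset.sum_congr rfl fun i _ => ?_
    rw [Finset.mul_sum]
    refine Finset.sum_congr rfl fun j _ => ?_
    rw [hH, of_apply, hχ, Matrix.map_apply, AlgHom.commutes]
    simp only [evalMat, Matrix.map_apply, Algebra.algebraMap_self, RingHom.id_apply]
    ring
  rw [hLH]
  positivity

end Conclusion

/-- inhomogeneous Putinar–Vasilescu-type Positivstellensatz with
universal quantifiers (Corollary of Theorem C). -/
theorem inhomogeneous_positivstellensatz {n m p q : ℕ}
    (Y : Set (Fin m → ℝ)) (hY : IsClosed Y)
    (ν : Measure (Fin m → ℝ)) (hsupp : hasSupport ν Y) (hmom : momentsFinite ν)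
    (hcar : Carleman ν)
    (F : Matrix (Fin p) (Fin p) (MvPolynomial (Fin n) ℝ)) (hFs : F.IsSymm)
    (G : Matrix (Fin q) (Fin q) (MvPolynomial (Fin n ⊕ Fin m) ℝ)) (hGs : G.IsSymm)
    (hpsd : ∀ x : Fin n → ℝ,
      (∀ y ∈ Y, (evalMat (Sum.elim x y) G).PosSemidef) → (evalMat x F).PosSemidef) :
    ∀ ε > (0 : ℝ), ∃ (N : ℕ)
      (S0 : Matrix (Fin p) (Fin p) (MvPolynomial (Fin n) ℝ))
      (Sg : Matrix (Fin p × Fin q) (Fin p × Fin q) (MvPolynomial (Fin n ⊕ Fin m) ℝ)),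
      IsSOSMatrix S0 ∧ IsSOSMatrix Sg ∧
      matDeg S0 ≤ 2 * (N + (Finset.univ.sup fun i => Finset.univ.sup fun j =>
        (F i j).totalDegree / 2 + 1)) ∧
      matDegX Sg ≤ 2 * (N + (Finset.univ.sup fun i => Finset.univ.sup fun j =>
        (F i j).totalDegree / 2 + 1) - (Finset.univ.sup fun a => Finset.univ.sup fun b =>
        degX (G a b) / 2 + 1)) ∧
      (((1 : MvPolynomial (Fin n) ℝ) + ∑ i, X i ^ 2) ^ N) •
          (F + (MvPolynomial.C ε *
            ((1 : MvPolynomial (Fin n) ℝ) + ∑ i, X i ^ 2) ^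
              (Finset.univ.sup fun i => Finset.univ.sup fun j =>
                (F i j).totalDegree / 2 + 1)) •
            (1 : Matrix (Fin p) (Fin p) (MvPolynomial (Fin n) ℝ))) =
        S0 + (lram Sg G).map (integY ν) := by
  intro ε hε
  set d := Finset.univ.sup fun i => Finset.univ.sup fun j => (F i j).totalDegree / 2 + 1 with hd
  set D := Finset.univ.sup fun a => Finset.univ.sup fun b => degX (G a b) / 2 + 1 with hDdef
  have hF : ∀ i j, (F i j).totalDegree < 2 * d := fun i j => by
    have h1 : (F i j).totalDegree / 2 + 1 ≤ d :=
      (Finset.le_sup (f := fun j => (F i j).totalDegree / 2 + 1) (mem_univ j)).trans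
        (Finset.le_sup (f := fun i => Finset.univ.sup fun j => (F i j).totalDegree / 2 + 1)
          (mem_univ i))
    omega
  have hD : ∀ a c, degX (G a c) ≤ 2 * D := fun a c => by
    have h1 : degX (G a c) / 2 + 1 ≤ D :=
      (Finset.le_sup (f := fun c => degX (G a c) / 2 + 1) (mem_univ c)).trans
        (Finset.le_sup (f := fun a => Finset.univ.sup fun c => degX (G a c) / 2 + 1)
          (mem_univ a))
    omega
  obtain ⟨N', hN', hrep⟩ := smul_mem_sosCone hmom (c := 1 / 2) (by norm_num)
    (frac_add_smul_one_mem_sosCone hsupp hmom hcar hGs hD hF hpsd hε)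
  obtain ⟨S0, Sg, hS0, hSg, hS0d, hSgd, he⟩ := hrep.mono hmom hN' (Nat.le_add_right N' d)
  refine ⟨N', S0, Sg, hS0, hSg, hS0d, hSgd, ?_⟩
  ext1 i j
  refine MvPolynomial.funext fun x => ?_
  have hx := (eval_thetaPoly_pos x).ne'
  have hsym : F j i = F i j := hFs.apply i j
  have hH : ∀ i j, ((((1 / 2 : ℝ) • ((Matrix.of fun i j => frac (F i j) d (hF i j).le) +
      ε • (1 : Matrix (Fin p) (Fin p) (boundedFractions n)))) i j :) : (Fin n → ℝ) → ℝ) x =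
      1 / 2 * (eval x (F i j) / eval x (thetaPoly n) ^ d + ε * (if i = j then 1 else 0)) := by
    intro i j
    change 1 / 2 * (_ / _ + ε * (((1 : Matrix (Fin p) (Fin p) (boundedFractions n)) i j :) :
      (Fin n → ℝ) → ℝ) x) = _
    congr 3
    by_cases hij : i = j
    · subst hij
      rw [Matrix.one_apply_eq, if_pos rfl]
      rfl
    · rw [Matrix.one_apply_ne hij, if_neg hij]
      rfl
  have he' := he x i j
  have hswap : (if j = i then (1 : ℝ) else 0) = if i = j then 1 else 0 := by
    simp only [eq_comm]
  rw [hH, hH, hsym, hswap] at he'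
  change eval x (thetaPoly n ^ N' * (F i j + C ε * thetaPoly n ^ d *
    (1 : Matrix (Fin p) (Fin p) (MvPolynomial (Fin n) ℝ)) i j)) = eval x (S0 i j + _)
  rw [map_add, Matrix.map_apply, ← he']
  have hone : eval x ((1 : Matrix (Fin p) (Fin p) (MvPolynomial (Fin n) ℝ)) i j) =
      if i = j then 1 else 0 := by
    by_cases hij : i = j
    · rw [if_pos hij, hij, Matrix.one_apply_eq, map_one]
    · rw [if_neg hij, Matrix.one_apply_ne hij, map_zero]
  rw [map_mul, map_add, map_mul, map_mul, hone, map_pow, map_pow, eval_C, pow_add]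
  field_simp
  ring
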